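/- arXiv:1410.6697 — 5 statements merged into one kernel-verified Lean document; each statement's English description precedes it below -/
import Mathlib

section
/- Let k ≥ 2 and b ≥ 2 be integers and let K_{J(b)} be the set of numbers in [0,1] whose base-b expansion contains only the digits 0 and 1. Let Ψ : ℕ → (0,∞) satisfy Ψ(x) < 1/(2x) for all sufficiently large x and Ψ(l·x) ≤ l·Ψ(x) for all positive integers l, x. Then for every constant c with 0 < c < 1/b, the set (𝒦_k(Ψ) \ 𝒦_k(cΨ)) ∩ K_{J(b)} is uncountable. -/
open Filter Set

/-- `Kk k Ψ` is the set of real `ζ` not algebraic of degree at most `k` such that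
`max_{1≤j≤k} |q·ζ^j - p_j| ≤ Ψ q` holds for infinitely many tuples
`(q, p₁, …, p_k) ∈ ℕ × ℤ^k` with `q ≥ 1`. -/
def Kk (k : ℕ) (Ψ : ℕ → ℝ) : Set ℝ :=
  {ζ : ℝ | (∀ P : Polynomial ℤ, P ≠ 0 → P.natDegree ≤ k → (Polynomial.aeval ζ) P ≠ 0) ∧
    {qp : ℕ × (Fin k → ℤ) | 1 ≤ qp.1 ∧
      ∀ j : Fin k, |(qp.1 : ℝ) * ζ ^ ((j : ℕ) + 1) - (qp.2 j : ℝ)| ≤ Ψ qp.1}.Infinite}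

/-- `baseExpSet b J` is the set of numbers in `[0,1]` admitting a base-`b` expansion all
of whose digits lie in `J`. -/
def baseExpSet (b : ℕ) (J : Set ℕ) : Set ℝ :=
  {x : ℝ | x ∈ Icc (0 : ℝ) 1 ∧ ∃ d : ℕ → ℕ, (∀ n, d n ∈ J) ∧
    x = ∑' n : ℕ, (d n : ℝ) / (b : ℝ) ^ (n + 1)}

/-!
Let `ζ` be a sum of `b ^ (-a n)` with `a` growing fast, and `s n` its truncations. If `q * ζ ^ j`
is within `Φ q < 1 / (2 * q)` of an integer for `1 ≤ j ≤ k`, then all `q * r ^ j` are integers for a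
single rational `r` near `ζ`, so `r.den ^ k ∣ q`. As `k ≥ 2`, `r` is close enough to `ζ` to be some
`s n`, and `Φ (l * x) ≤ l * Φ x` reduces the question to `q = b ^ (a n * k)`, where only the size of
`ζ - s n` matters. Choose `a (n + 1)` least such that this `q` works for `Ψ`. Lowering it by one
multiplies `ζ - s n` by about `b < 1 / c`, so `q` fails for `c * Ψ`. For the same reason `q` fails
for `c * Ψ` when `a (n + 1)` is one less than this least exponent. The two exponents give disjoint
ranges for `ζ`, so choosing between them at every other step makes `ζ` avoid a given countable set.
-/

open scoped Topology

section RationalApproximation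

lemma one_div_den_le_abs {t : ℚ} (ht : t ≠ 0) : (1 : ℚ) / t.den ≤ |t| := by
  have hnum : (1 : ℚ) ≤ |(t.num : ℚ)| := mod_cast Int.one_le_abs (Rat.num_ne_zero.2 ht)
  calc (1 : ℚ) / t.den ≤ |(t.num : ℚ)| / t.den := by gcongr
    _ = |t| := by rw [← Nat.abs_cast t.den, ← abs_div, Rat.num_div_den]

lemma one_div_den_mul_den_le_abs_sub {r s : ℚ} (h : r ≠ s) :
    (1 : ℚ) / (r.den * s.den) ≤ |r - s| := by
  have := (r - s).den_pos
  have hle : (r - s).den ≤ r.den * s.den :=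
    Nat.le_of_dvd (mul_pos r.den_pos s.den_pos) (Rat.sub_den_dvd r s)
  calc (1 : ℚ) / (r.den * s.den) = 1 / ((r.den * s.den : ℕ) : ℚ) := by push_cast; rfl
    _ ≤ 1 / (r - s).den := by gcongr
    _ ≤ |r - s| := one_div_den_le_abs (sub_ne_zero.2 h)

lemma intCast_mul_eq_of_abs_sub_lt {r : ℚ} {m n : ℤ} (h : |m * r - n| < 1 / r.den) :
    m * r = n := by
  by_contra hne
  have hden : (m * r).den ≤ r.den :=
    Nat.le_of_dvd r.den_pos (by simpa using Rat.mul_den_dvd m r)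
  have hsep := one_div_den_mul_den_le_abs_sub hne
  rw [Rat.den_intCast, Nat.cast_one, mul_one] at hsep
  have := (m * r).den_pos
  have : (1 : ℚ) / r.den ≤ 1 / (m * r).den := by gcongr
  linarith

-- If `q * r ^ (j + 1)` is the integer `p j`, then `q * r ^ (j + 2) = p j * r` has denominator at
-- most that of `r`, so it cannot be close to an integer without being one.
lemma natCast_mul_pow_eq_of_abs_sub_lt {r : ℚ} {q k : ℕ} {p : Fin k → ℤ}
    (h : ∀ j : Fin k, |q * r ^ ((j : ℕ) + 1) - p j| < 1 / r.den) (j : Fin k) :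
    q * r ^ ((j : ℕ) + 1) = p j := by
  obtain ⟨j, hj⟩ := j
  induction j with
  | zero => exact intCast_mul_eq_of_abs_sub_lt (m := q) (by simpa using h ⟨0, hj⟩)
  | succ j ih =>
    have hstep : (q : ℚ) * r ^ (j + 2) = p ⟨j, by omega⟩ * r := by rw [← ih (by omega)]; ring
    exact hstep.trans (intCast_mul_eq_of_abs_sub_lt (hstep ▸ h ⟨j + 1, hj⟩))

lemma den_dvd_of_natCast_mul_eq {r : ℚ} {q : ℕ} {m : ℤ} (hq : q ≠ 0) (h : q * r = m) :
    r.den ∣ q := by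
  have hr : r = Rat.divInt m q := by
    rw [Rat.divInt_eq_div, ← h, Int.cast_natCast, mul_div_cancel_left₀ _ (Nat.cast_ne_zero.2 hq)]
  exact Int.natCast_dvd_natCast.1 (hr ▸ Rat.den_dvd m q)

lemma exists_intCast_eq_natCast_mul_pow {r : ℚ} {q k j : ℕ} (hq : r.den ^ k ∣ q) (hj : j ≤ k) :
    ∃ m : ℤ, (q : ℚ) * r ^ j = m := by
  obtain ⟨d, rfl⟩ := (pow_dvd_pow r.den hj).trans hq
  refine ⟨d * r.num ^ j, ?_⟩
  have hpow : (r.den : ℚ) ^ j * r ^ j = r.num ^ j := by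
    rw [← mul_pow, mul_comm, Rat.mul_den_eq_num]
  push_cast
  rw [← hpow]
  ring

lemma abs_pow_succ_sub_pow_succ_le {u v : ℝ} (hu : |u| ≤ 1 / 2) (hv : |v| ≤ 1 / 2) (n : ℕ) :
    |u ^ (n + 1) - v ^ (n + 1)| ≤ |u - v| := by
  have hn : ((n + 1 : ℕ) : ℝ) ≤ 2 ^ n := mod_cast Nat.lt_two_pow_self (n := n)
  calc |u ^ (n + 1) - v ^ (n + 1)|
      ≤ |u - v| * (n + 1 : ℕ) * max |u| |v| ^ n := abs_pow_sub_pow_le u v (n + 1)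
    _ ≤ |u - v| * 2 ^ n * (1 / 2) ^ n := by gcongr; exact max_le hu hv
    _ = |u - v| := by rw [mul_assoc, ← mul_pow]; norm_num

lemma abs_mul_pow_succ_sub_lt {ζ u q E p : ℝ} {n : ℕ} (hζ : |ζ| ≤ 1 / 4) (hq : 2 ≤ q)
    (hE : E < 1 / (2 * q)) (hu : |q * ζ - q * u| ≤ E) (hp : |q * ζ ^ (n + 1) - p| ≤ E) :
    |q * u ^ (n + 1) - p| < 1 / q := by
  have hq0 : 0 < q := by linarith
  have hE_quarter : E < 1 / 4 := hE.trans_le (one_div_le_one_div_of_le (by norm_num) (by linarith))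
  rw [← mul_sub, abs_mul, abs_of_pos hq0] at hu
  have hclose : |ζ - u| ≤ 1 / 4 := by nlinarith [abs_nonneg (ζ - u)]
  have hu_half : |u| ≤ 1 / 2 := by
    linarith [abs_sub_abs_le_abs_sub u ζ, abs_sub_comm u ζ]
  have hpow : q * |u ^ (n + 1) - ζ ^ (n + 1)| ≤ E := by
    refine le_trans ?_ hu
    rw [abs_sub_comm ζ u]
    exact mul_le_mul_of_nonneg_left
      (abs_pow_succ_sub_pow_succ_le hu_half (hζ.trans (by norm_num)) n) hq0.le
  calc |q * u ^ (n + 1) - p|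
      = |q * (u ^ (n + 1) - ζ ^ (n + 1)) + (q * ζ ^ (n + 1) - p)| := by ring_nf
    _ ≤ |q * (u ^ (n + 1) - ζ ^ (n + 1))| + |q * ζ ^ (n + 1) - p| := abs_add_le _ _
    _ ≤ E + E := by rw [abs_mul, abs_of_pos hq0]; gcongr
    _ < 1 / (2 * q) + 1 / (2 * q) := by gcongr
    _ = 1 / q := by field_simp; norm_num

lemma exists_rat_pow_eq_of_approx {k : ℕ} (hk : 0 < k) {ζ E : ℝ} {q : ℕ} {p : Fin k → ℤ}
    (hζ : |ζ| ≤ 1 / 4) (hq : 2 ≤ q) (hE : E < 1 / (2 * (q : ℝ)))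
    (h : ∀ j : Fin k, |(q : ℝ) * ζ ^ ((j : ℕ) + 1) - p j| ≤ E) :
    ∃ r : ℚ, r.den ^ k ∣ q ∧ ∀ j : Fin k, (q : ℝ) * (r : ℝ) ^ ((j : ℕ) + 1) = p j := by
  have hq0 : q ≠ 0 := by omega
  obtain ⟨r, hr⟩ : ∃ r : ℚ, (q : ℚ) * r = p ⟨0, hk⟩ :=
    ⟨p ⟨0, hk⟩ / q, mul_div_cancel₀ _ (Nat.cast_ne_zero.2 hq0)⟩
  have hr_real : (q : ℝ) * (r : ℝ) = p ⟨0, hk⟩ := mod_cast congrArg (Rat.cast : ℚ → ℝ) hr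
  have hden : (1 : ℝ) / q ≤ 1 / r.den := by
    have := Nat.le_of_dvd (by omega) (den_dvd_of_natCast_mul_eq hq0 hr)
    have := r.den_pos
    gcongr
  have hclose (j : Fin k) : |(q : ℝ) * (r : ℝ) ^ ((j : ℕ) + 1) - p j| < 1 / r.den :=
    (abs_mul_pow_succ_sub_lt hζ (mod_cast hq) hE
      (by simpa only [hr_real, zero_add, pow_one] using h ⟨0, hk⟩) (h j)).trans_le hden
  have heq := natCast_mul_pow_eq_of_abs_sub_lt (r := r) (q := q) (p := p)
    fun j => by rw [← Rat.cast_lt (K := ℝ)]; push_cast; exact hclose j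
  refine ⟨r, ?_, fun j => by exact_mod_cast congrArg (Rat.cast : ℚ → ℝ) (heq j)⟩
  have htop := heq ⟨k - 1, by omega⟩
  simp only [Nat.sub_add_cancel hk] at htop
  simpa only [Rat.den_pow] using den_dvd_of_natCast_mul_eq hq0 htop

end RationalApproximation

section PowerShift

/-- Moving `s` to `s + t` raises each of `D * s, …, D * s ^ k` by at most `ε`. With `D` the `k`-th
power of a denominator of `s` and `ε = Ψ D`, this says that `D` solves the inequalities defining
`Kk k Ψ` at `s + t`. The exponents are shifted by one as in `Kk`. -/
def PowerShiftLE (k : ℕ) (D ε s t : ℝ) : Prop :=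
  ∀ j : Fin k, D * ((s + t) ^ ((j : ℕ) + 1) - s ^ ((j : ℕ) + 1)) ≤ ε

variable {k : ℕ} {D ε s t : ℝ}

lemma PowerShiftLE.anti {t' : ℝ} (h : PowerShiftLE k D ε s t') (hD : 0 ≤ D) (hst : 0 ≤ s + t)
    (htt' : t ≤ t') : PowerShiftLE k D ε s t :=
  fun j => le_trans (by gcongr) (h j)

lemma eventually_powerShiftLE (k : ℕ) (D s : ℝ) (hε : 0 < ε) :
    ∀ᶠ t in 𝓝 0, PowerShiftLE k D ε s t := by
  refine eventually_all.2 fun j => ?_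
  have hcont : Continuous fun t : ℝ => D * ((s + t) ^ ((j : ℕ) + 1) - s ^ ((j : ℕ) + 1)) := by
    fun_prop
  exact (hcont.tendsto 0).eventually_le_const (by simpa using hε)

lemma PowerShiftLE.two_mul_sq_mul_lt_one (h : PowerShiftLE k D ε s t) (hk : 0 < k) (hD : 0 < D)
    (hε : ε < 1 / (2 * D)) : 2 * D ^ 2 * t < 1 := by
  have hlin : D * t ≤ ε := by simpa using h ⟨0, hk⟩
  have := hlin.trans_lt hε
  rw [lt_div_iff₀ (by positivity)] at this
  linarith

lemma mul_add_pow_succ_sub_pow_succ_le {c s x y : ℝ} (hc : 0 ≤ c) (hs : 0 < s) (hx : 0 ≤ x)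
    (hy : 0 ≤ y) {n : ℕ} (h : c * y * (1 + y / s) ^ n ≤ x) :
    c * ((s + y) ^ (n + 1) - s ^ (n + 1)) ≤ (s + x) ^ (n + 1) - s ^ (n + 1) := by
  have hupper : (s + y) ^ (n + 1) - s ^ (n + 1) ≤ (n + 1) * (s + y) ^ n * y := by
    have := pow_add_mul_le_add_pow (a := s + y) (b := -y) (by linarith) (by linarith) (n + 1)
    rw [add_neg_cancel_right, Nat.add_sub_cancel] at this
    push_cast at this
    linarith
  have hlower : (n + 1) * s ^ n * x ≤ (s + x) ^ (n + 1) - s ^ (n + 1) := by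
    have := pow_add_mul_le_add_pow (a := s) (b := x) hs.le (by linarith) (n + 1)
    rw [Nat.add_sub_cancel] at this
    push_cast at this
    linarith
  have hfactor : (s + y) ^ n = s ^ n * (1 + y / s) ^ n := by
    rw [← mul_pow, mul_add, mul_one, mul_div_cancel₀ _ hs.ne']
  calc c * ((s + y) ^ (n + 1) - s ^ (n + 1)) ≤ c * ((n + 1) * (s + y) ^ n * y) := by gcongr
    _ = (n + 1) * s ^ n * (c * y * (1 + y / s) ^ n) := by rw [hfactor]; ring
    _ ≤ (n + 1) * s ^ n * x := by gcongr
    _ ≤ (s + x) ^ (n + 1) - s ^ (n + 1) := hlower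

lemma PowerShiftLE.of_const_mul {c x y : ℝ} (h : PowerShiftLE k D (c * ε) s x) (hc : 0 < c)
    (hD : 0 ≤ D) (hs : 0 < s) (hx : 0 ≤ x) (hy : 0 ≤ y) (hxy : c * y * (1 + y / s) ^ k ≤ x) :
    PowerShiftLE k D ε s y := by
  intro j
  have hpow : (1 + y / s) ^ (j : ℕ) ≤ (1 + y / s) ^ k :=
    pow_le_pow_right₀ (le_add_of_nonneg_right (by positivity)) j.2.le
  have hratio := mul_add_pow_succ_sub_pow_succ_le hc.le hs hx hy (n := j)
    (le_trans (by gcongr) hxy)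
  refine le_of_mul_le_mul_left ?_ hc
  calc c * (D * ((s + y) ^ ((j : ℕ) + 1) - s ^ ((j : ℕ) + 1)))
      = D * (c * ((s + y) ^ ((j : ℕ) + 1) - s ^ ((j : ℕ) + 1))) := mul_left_comm _ _ _
    _ ≤ D * ((s + x) ^ ((j : ℕ) + 1) - s ^ ((j : ℕ) + 1)) := by gcongr
    _ ≤ c * ε := h j

lemma eventually_mul_one_add_div_pow_le {b c : ℝ} (hcb : c * b < 1) (s : ℝ) (k : ℕ) :
    ∀ᶠ x in 𝓝[>] 0, c * (b * x + (b * x) ^ 2) * (1 + (b * x + (b * x) ^ 2) / s) ^ k ≤ x := by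
  have hcont : Continuous fun x : ℝ =>
      c * (b * (1 + b * x)) * (1 + (b * x + (b * x) ^ 2) / s) ^ k := by fun_prop
  have hlt := (hcont.tendsto 0).eventually_le_const (u := 1) (by simpa using hcb)
  filter_upwards [nhdsWithin_le_nhds hlt, self_mem_nhdsWithin] with x hx hx0
  calc c * (b * x + (b * x) ^ 2) * (1 + (b * x + (b * x) ^ 2) / s) ^ k
      = c * (b * (1 + b * x)) * (1 + (b * x + (b * x) ^ 2) / s) ^ k * x := by ring
    _ ≤ 1 * x := by gcongr; exact (mem_Ioi.1 hx0).le
    _ = x := one_mul x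

end PowerShift

section LacunarySum

/-- Exponent sequences growing by a factor of at least four. They are used as the positions of the
digits `1` of a base-`b` expansion; the first position is at least `3` to keep the number small. -/
structure IsLacunary (a : ℕ → ℕ) : Prop where
  three_le : 3 ≤ a 0
  four_mul_le : ∀ n, 4 * a n ≤ a (n + 1)

/-- The rational number whose base-`b` digits `1` are at the positions `a 0, …, a n`. -/
def lacunarySum (b : ℕ) (a : ℕ → ℕ) (n : ℕ) : ℚ := ∑ i ∈ Finset.range (n + 1), ((b : ℚ) ^ a i)⁻¹

/-- The real number whose base-`b` digits `1` are at the positions `a 0, a 1, …`. -/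
noncomputable def lacunarySeries (b : ℕ) (a : ℕ → ℕ) : ℝ := ∑' n, ((b : ℝ) ^ a n)⁻¹

lemma IsLacunary.add_three_le {a : ℕ → ℕ} (ha : IsLacunary a) (n : ℕ) : n + 3 ≤ a n := by
  induction n with
  | zero => exact ha.three_le
  | succ n ih => have := ha.four_mul_le n; omega

lemma IsLacunary.strictMono {a : ℕ → ℕ} (ha : IsLacunary a) : StrictMono a :=
  strictMono_nat_of_lt_succ fun n => by
    have := ha.four_mul_le n
    have := ha.add_three_le n
    omega

lemma lacunarySum_succ (b : ℕ) (a : ℕ → ℕ) (n : ℕ) :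
    lacunarySum b a (n + 1) = lacunarySum b a n + ((b : ℚ) ^ a (n + 1))⁻¹ :=
  Finset.sum_range_succ _ _

lemma cast_lacunarySum (b : ℕ) (a : ℕ → ℕ) (n : ℕ) :
    (lacunarySum b a n : ℝ) = ∑ i ∈ Finset.range (n + 1), ((b : ℝ) ^ a i)⁻¹ := by
  simp [lacunarySum]

lemma lacunarySum_zero_le (b : ℕ) (a : ℕ → ℕ) (n : ℕ) : lacunarySum b a 0 ≤ lacunarySum b a n :=
  Finset.sum_le_sum_of_subset_of_nonneg (Finset.range_subset_range.2 (by omega))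
    fun _ _ _ => by positivity

lemma lacunarySum_pos {b : ℕ} (hb : 0 < b) (a : ℕ → ℕ) (n : ℕ) : 0 < lacunarySum b a n :=
  Finset.sum_pos (fun _ _ => by positivity) Finset.nonempty_range_add_one

lemma lacunarySeries_nonneg (b : ℕ) (a : ℕ → ℕ) : 0 ≤ lacunarySeries b a :=
  tsum_nonneg fun _ => by positivity

lemma mul_inv_pow_succ {b : ℕ} (hb : b ≠ 0) (n : ℕ) :
    (b : ℝ) * ((b : ℝ) ^ (n + 1))⁻¹ = ((b : ℝ) ^ n)⁻¹ := by
  have : (b : ℝ) ≠ 0 := mod_cast hb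
  rw [pow_succ]
  field_simp

-- The fraction `(r.num * b ^ (n - m) + 1) / b ^ n` is reduced.
lemma den_add_inv_pow {b m n : ℕ} (hb : 0 < b) (hmn : m < n) {r : ℚ} (hr : r.den = b ^ m) :
    (r + ((b : ℚ) ^ n)⁻¹).den = b ^ n := by
  obtain ⟨d, rfl⟩ := Nat.exists_eq_add_of_lt hmn
  have : (b : ℚ) ≠ 0 := by positivity
  have hfrac : r + ((b : ℚ) ^ (m + d + 1))⁻¹
      = ((r.num * b ^ (d + 1) + 1 : ℤ) : ℚ) / ((b ^ (m + d + 1) : ℤ) : ℚ) := by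
    conv_lhs => rw [← Rat.num_div_den r, hr]
    push_cast
    rw [add_assoc m, pow_add]
    field_simp
  have hcop : IsCoprime (r.num * b ^ (d + 1) + 1) (b ^ (m + d + 1) : ℤ) :=
    IsCoprime.pow_right ⟨1, -(r.num * b ^ d), by ring⟩
  rw [hfrac]
  exact_mod_cast Rat.den_div_eq_of_coprime (by positivity) (Int.isCoprime_iff_nat_coprime.1 hcop)

variable {b : ℕ} {a : ℕ → ℕ}

lemma den_lacunarySum (hb : 0 < b) (ha : IsLacunary a) (n : ℕ) :
    (lacunarySum b a n).den = b ^ a n := by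
  induction n with
  | zero =>
    have hpos : 0 < a 0 := by have := ha.three_le; omega
    simpa [lacunarySum] using den_add_inv_pow hb hpos (r := 0) rfl
  | succ n ih =>
    rw [lacunarySum_succ]
    exact den_add_inv_pow hb (ha.strictMono n.lt_succ_self) ih

lemma inv_pow_le_eighth (hb : 2 ≤ b) (ha : IsLacunary a) (n : ℕ) : ((b : ℝ) ^ a n)⁻¹ ≤ 1 / 8 := by
  have h8 : 8 ≤ b ^ a n := calc
    8 = 2 ^ 3 := rfl
    _ ≤ b ^ 3 := Nat.pow_le_pow_left hb 3
    _ ≤ b ^ a n := Nat.pow_le_pow_right (by omega) (by have := ha.add_three_le n; omega)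
  rw [one_div]
  gcongr
  exact_mod_cast h8

lemma two_mul_inv_pow_succ_le_sq (hb : 2 ≤ b) (ha : IsLacunary a) (n : ℕ) :
    2 * ((b : ℝ) ^ a (n + 1))⁻¹ ≤ (((b : ℝ) ^ a n)⁻¹) ^ 2 := by
  have hb_real : (2 : ℝ) ≤ b := mod_cast hb
  have hexp : 2 * a n + 1 ≤ a (n + 1) := by
    have := ha.four_mul_le n
    have := ha.add_three_le n
    omega
  calc 2 * ((b : ℝ) ^ a (n + 1))⁻¹ ≤ b * ((b : ℝ) ^ (2 * a n + 1))⁻¹ := by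
        gcongr
        linarith
    _ = (((b : ℝ) ^ a n)⁻¹) ^ 2 := by
        rw [mul_inv_pow_succ (by omega), mul_comm, pow_mul, inv_pow]

lemma summable_inv_pow (hb : 2 ≤ b) (ha : IsLacunary a) :
    Summable fun n => ((b : ℝ) ^ a n)⁻¹ := by
  have hb_real : (1 : ℝ) < b := mod_cast hb
  have hgeom : Summable fun n : ℕ => ((b : ℝ) ^ n)⁻¹ := by
    simpa only [inv_pow] using
      summable_geometric_of_lt_one (by positivity) (inv_lt_one_of_one_lt₀ hb_real)
  exact hgeom.comp_injective ha.strictMono.injective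

lemma lacunarySum_add_le_lacunarySeries (hb : 2 ≤ b) (ha : IsLacunary a) (n : ℕ) :
    (lacunarySum b a n : ℝ) + ((b : ℝ) ^ a (n + 1))⁻¹ ≤ lacunarySeries b a := by
  rw [cast_lacunarySum, ← Finset.sum_range_succ]
  exact (summable_inv_pow hb ha).sum_le_tsum _ fun _ _ => by positivity

lemma lacunarySum_le_lacunarySeries (hb : 2 ≤ b) (ha : IsLacunary a) (n : ℕ) :
    (lacunarySum b a n : ℝ) ≤ lacunarySeries b a :=
  (le_add_of_nonneg_right (by positivity)).trans (lacunarySum_add_le_lacunarySeries hb ha n)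

lemma lacunarySeries_le_add_two_mul (hb : 2 ≤ b) (ha : IsLacunary a) (n : ℕ) :
    lacunarySeries b a ≤ lacunarySum b a n + 2 * ((b : ℝ) ^ a (n + 1))⁻¹ := by
  have hsum : Tendsto (fun n => (lacunarySum b a n : ℝ)) atTop (𝓝 (lacunarySeries b a)) := by
    simp only [cast_lacunarySum]
    exact (tendsto_add_atTop_iff_nat 1).2 (summable_inv_pow hb ha).hasSum.tendsto_sum_nat
  have hterm : Tendsto (fun n => ((b : ℝ) ^ a (n + 1))⁻¹) atTop (𝓝 0) :=
    (tendsto_add_atTop_iff_nat 1).2 (summable_inv_pow hb ha).tendsto_atTop_zero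
  have hanti : Antitone fun n => (lacunarySum b a n : ℝ) + 2 * ((b : ℝ) ^ a (n + 1))⁻¹ := by
    refine antitone_nat_of_succ_le fun n => ?_
    have hpos : 0 < ((b : ℝ) ^ a (n + 1))⁻¹ := by positivity
    have := two_mul_inv_pow_succ_le_sq hb ha (n + 1)
    have := inv_pow_le_eighth hb ha (n + 1)
    rw [lacunarySum_succ]
    push_cast
    nlinarith
  exact hanti.le_of_tendsto (by simpa using hsum.add (hterm.const_mul 2)) n

lemma abs_lacunarySeries_sub_lacunarySum_le (hb : 2 ≤ b) (ha : IsLacunary a) (n : ℕ) :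
    |lacunarySeries b a - lacunarySum b a n| ≤ 2 * ((b : ℝ) ^ a (n + 1))⁻¹ := by
  rw [abs_of_nonneg (sub_nonneg.2 (lacunarySum_le_lacunarySeries hb ha n))]
  linarith [lacunarySeries_le_add_two_mul hb ha n]

lemma lacunarySeries_le_add_add_sq (hb : 2 ≤ b) (ha : IsLacunary a) (n : ℕ) :
    lacunarySeries b a
      ≤ lacunarySum b a n + (((b : ℝ) ^ a (n + 1))⁻¹ + (((b : ℝ) ^ a (n + 1))⁻¹) ^ 2) := by
  have hnext := lacunarySeries_le_add_two_mul hb ha (n + 1)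
  have := two_mul_inv_pow_succ_le_sq hb ha (n + 1)
  rw [lacunarySum_succ] at hnext
  push_cast at hnext
  linarith

lemma lacunarySeries_le_quarter (hb : 2 ≤ b) (ha : IsLacunary a) :
    lacunarySeries b a ≤ 1 / 4 := by
  have hzero := lacunarySeries_le_add_two_mul hb ha 0
  have := two_mul_inv_pow_succ_le_sq hb ha 0
  have := inv_pow_le_eighth hb ha 0
  have hpos : 0 < ((b : ℝ) ^ a 0)⁻¹ := by positivity
  rw [cast_lacunarySum, zero_add, Finset.sum_range_one] at hzero
  nlinarith

lemma lacunarySeries_mem_baseExpSet (hb : 2 ≤ b) (ha : IsLacunary a) :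
    lacunarySeries b a ∈ baseExpSet b {0, 1} := by
  classical
  have hsucc (n : ℕ) : a n - 1 + 1 = a n := by have := ha.add_three_le n; omega
  have hinj : Function.Injective fun n => a n - 1 := fun m n hmn =>
    ha.strictMono.injective (by rw [← hsucc m, ← hsucc n]; exact congrArg (· + 1) hmn)
  refine ⟨⟨lacunarySeries_nonneg b a, (lacunarySeries_le_quarter hb ha).trans (by norm_num)⟩,
    fun i => if i + 1 ∈ range a then 1 else 0, fun i => ?_, ?_⟩
  · dsimp only
    split_ifs <;> simp
  · rw [← hinj.tsum_eq]
    · simp [lacunarySeries, hsucc]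
    · intro i hi
      obtain ⟨n, hn⟩ : i + 1 ∈ range a := by
        by_contra hi'
        exact hi (by simp only [if_neg hi', Nat.cast_zero, zero_div])
      exact ⟨n, by dsimp only; omega⟩

end LacunarySum

section Approximants

/-- The tuples `(q, p₁, …, p_k)` whose infinitude is required in the definition of `Kk k Φ`. -/
def powerApproximants (k : ℕ) (Φ : ℕ → ℝ) (ζ : ℝ) : Set (ℕ × (Fin k → ℤ)) :=
  {qp | 1 ≤ qp.1 ∧ ∀ j : Fin k, |(qp.1 : ℝ) * ζ ^ ((j : ℕ) + 1) - (qp.2 j : ℝ)| ≤ Φ qp.1}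

lemma finite_setOf_abs_sub_intCast_le (x E : ℝ) : {m : ℤ | |x - m| ≤ E}.Finite :=
  (finite_Icc ⌈x - E⌉ ⌊x + E⌋).subset fun m hm => by
    rw [mem_ofPred_eq, abs_le] at hm
    exact ⟨Int.ceil_le.2 (by linarith), Int.le_floor.2 (by linarith)⟩

lemma finite_powerApproximants_of_eventually_notMem {k : ℕ} {Φ : ℕ → ℝ} {ζ : ℝ}
    (h : ∀ᶠ q in atTop, ∀ p, (q, p) ∉ powerApproximants k Φ ζ) :
    (powerApproximants k Φ ζ).Finite := by
  obtain ⟨B, hB⟩ := eventually_atTop.1 h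
  refine Finite.of_finite_fibers Prod.fst ((finite_lt_nat B).subset ?_) fun q _ => ?_
  · rintro _ ⟨⟨q, p⟩, hqp, rfl⟩
    exact not_le.1 fun hBq => hB q hBq p hqp
  · refine ((finite_singleton q).prod (Finite.pi' fun j : Fin k =>
      finite_setOf_abs_sub_intCast_le ((q : ℝ) * ζ ^ ((j : ℕ) + 1)) (Φ q))).subset ?_
    rintro ⟨_, p⟩ ⟨⟨-, hp⟩, rfl⟩
    exact ⟨rfl, hp⟩

lemma exists_mem_powerApproximants {k q : ℕ} {Φ : ℕ → ℝ} {ζ t : ℝ} {r : ℚ} (hq : 1 ≤ q)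
    (hdvd : r.den ^ k ∣ q) (hr : 0 ≤ r) (hrζ : r ≤ ζ) (hζ : ζ ≤ r + t)
    (h : PowerShiftLE k q (Φ q) r t) : ∃ p, (q, p) ∈ powerApproximants k Φ ζ := by
  have hr_real : (0 : ℝ) ≤ r := mod_cast hr
  choose p hp using fun j : Fin k =>
    exists_intCast_eq_natCast_mul_pow (j := j + 1) hdvd (Nat.succ_le_of_lt j.2)
  refine ⟨p, hq, fun j => ?_⟩
  have hp_real : (q : ℝ) * (r : ℝ) ^ ((j : ℕ) + 1) = p j :=
    mod_cast congrArg (Rat.cast : ℚ → ℝ) (hp j)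
  have hshift := h.anti (t := ζ - r) (by positivity) (by linarith) (by linarith) j
  rw [add_sub_cancel] at hshift
  dsimp only
  rwa [← hp_real, ← mul_sub, abs_of_nonneg]
  exact mul_nonneg (by positivity) (sub_nonneg.2 (by gcongr))

lemma eventually_exists_le_lt_succ {u : ℕ → ℕ} (hu : StrictMono u) {P : ℕ → Prop}
    (hP : ∀ᶠ n in atTop, P n) : ∀ᶠ q in atTop, ∃ n, P n ∧ u n ≤ q ∧ q < u (n + 1) := by
  obtain ⟨N, hN⟩ := eventually_atTop.1 hP
  filter_upwards [eventually_ge_atTop (u N)] with q hq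
  by_contra! hstep
  have hbounded : ∀ n ≥ N, u n ≤ q := fun n hn =>
    Nat.le_induction hq (fun n hn ih => hstep n (hN n hn) ih) n hn
  have := hbounded (max N (q + 1)) (le_max_left _ _)
  have := hu.le_apply (x := max N (q + 1))
  omega

variable {k b : ℕ} {a : ℕ → ℕ} {Φ : ℕ → ℝ}

lemma infinite_powerApproximants_lacunarySeries (hb : 2 ≤ b) (ha : IsLacunary a) (hk : k ≠ 0)
    (h : {n | PowerShiftLE k ((b ^ a n) ^ k : ℕ) (Φ ((b ^ a n) ^ k)) (lacunarySum b a n)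
      (((b : ℝ) ^ a (n + 1))⁻¹ + (((b : ℝ) ^ a (n + 1))⁻¹) ^ 2)}.Infinite) :
    (powerApproximants k Φ (lacunarySeries b a)).Infinite := by
  have hinj : Function.Injective fun n => (b ^ a n) ^ k :=
    (Nat.pow_left_injective hk).comp
      ((Nat.pow_right_injective hb).comp ha.strictMono.injective)
  refine ((h.image hinj.injOn).mono ?_).of_image Prod.fst
  rintro _ ⟨n, hn, rfl⟩
  obtain ⟨p, hp⟩ := exists_mem_powerApproximants (Nat.one_le_iff_ne_zero.2 (by positivity))
    (by rw [den_lacunarySum (by omega) ha]) (lacunarySum_pos (by omega) a n).le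
    (lacunarySum_le_lacunarySeries hb ha n) (lacunarySeries_le_add_add_sq hb ha n) hn
  exact ⟨_, hp, rfl⟩

lemma four_mul_mul_le_of_pow_le {v Q R : ℕ} (hQ : 4 ≤ Q) (hv : v ^ 2 ≤ R) (hQR : Q ^ 4 ≤ R) :
    4 * (v * Q) ≤ R := by
  have hsq : (v * Q ^ 2) ^ 2 ≤ R ^ 2 := calc
    (v * Q ^ 2) ^ 2 = v ^ 2 * Q ^ 4 := by ring
    _ ≤ R * R := Nat.mul_le_mul hv hQR
    _ = R ^ 2 := (sq R).symm
  calc 4 * (v * Q) ≤ Q * (v * Q) := by gcongr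
    _ = v * Q ^ 2 := by ring
    _ ≤ R := (Nat.pow_le_pow_iff_left two_ne_zero).1 hsq

lemma eq_lacunarySum_of_abs_sub_lt (hb : 2 ≤ b) (ha : IsLacunary a) {n q : ℕ} {r : ℚ}
    (hr : r.den ^ 2 ≤ q) (hnq : b ^ a n ≤ q) (hqn : q < b ^ a (n + 1))
    (h : |lacunarySeries b a - r| < 1 / (2 * (q : ℝ) ^ 2)) : r = lacunarySum b a n := by
  by_contra hne
  have hpos : 0 < r.den * b ^ a n := mul_pos r.den_pos (by positivity)
  have hsep : (1 : ℝ) / (r.den * b ^ a n : ℕ) ≤ |(r : ℝ) - lacunarySum b a n| := by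
    have := one_div_den_mul_den_le_abs_sub hne
    rw [den_lacunarySum (by omega) ha] at this
    have hreal := (Rat.cast_le (K := ℝ)).2 this
    push_cast at hreal ⊢
    exact hreal
  have hmul_sq : r.den * b ^ a n ≤ q ^ 2 := by
    rw [sq]
    exact Nat.mul_le_mul ((Nat.le_self_pow two_ne_zero _).trans hr) hnq
  have hmul_next : 4 * (r.den * b ^ a n) ≤ b ^ a (n + 1) := by
    refine four_mul_mul_le_of_pow_le ?_ (hr.trans hqn.le) ?_
    · calc 4 = 2 ^ 2 := rfl
        _ ≤ b ^ 2 := Nat.pow_le_pow_left hb 2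
        _ ≤ b ^ a n := Nat.pow_le_pow_right (by omega) (by have := ha.add_three_le n; omega)
    · rw [← pow_mul, mul_comm]
      exact Nat.pow_le_pow_right (by omega) (ha.four_mul_le n)
  have hseries := abs_lacunarySeries_sub_lacunarySum_le hb ha n
  set w : ℕ := r.den * b ^ a n
  have hhalf : (1 : ℝ) / (2 * (q : ℝ) ^ 2) ≤ 1 / 2 * (1 / w) := by
    rw [← one_div_mul_one_div]
    gcongr
    exact_mod_cast hmul_sq
  have hhalf' : 2 * ((b : ℝ) ^ a (n + 1))⁻¹ ≤ 1 / 2 * (1 / w) := by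
    calc 2 * ((b : ℝ) ^ a (n + 1))⁻¹ ≤ 2 * (4 * (w : ℝ))⁻¹ := by
          gcongr
          exact_mod_cast hmul_next
      _ = 1 / 2 * (1 / w) := by field_simp; norm_num
  have htri := abs_sub_le (r : ℝ) (lacunarySeries b a) (lacunarySum b a n)
  rw [abs_sub_comm (r : ℝ) (lacunarySeries b a)] at htri
  linarith

lemma dvd_and_mul_lacunarySum_pow_eq (hb : 2 ≤ b) (ha : IsLacunary a) (hk : 2 ≤ k) {n q : ℕ}
    {p : Fin k → ℤ} (hnq : b ^ a n ≤ q) (hqn : q < b ^ a (n + 1)) (hΦ : Φ q < 1 / (2 * (q : ℝ)))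
    (h : (q, p) ∈ powerApproximants k Φ (lacunarySeries b a)) :
    (b ^ a n) ^ k ∣ q ∧ ∀ j : Fin k, (q : ℝ) * (lacunarySum b a n : ℝ) ^ ((j : ℕ) + 1) = p j := by
  have hq : 2 ≤ q := calc
    2 ≤ b := hb
    _ ≤ b ^ a n := Nat.le_self_pow (by have := ha.add_three_le n; omega) b
    _ ≤ q := hnq
  have hq0 : (0 : ℝ) < q := by positivity
  have hζ : |lacunarySeries b a| ≤ 1 / 4 := by
    rw [abs_of_nonneg (lacunarySeries_nonneg b a)]
    exact lacunarySeries_le_quarter hb ha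
  obtain ⟨r, hdvd, hr⟩ := exists_rat_pow_eq_of_approx (by omega) hζ hq hΦ h.2
  have hclose : |lacunarySeries b a - r| < 1 / (2 * (q : ℝ) ^ 2) := by
    have hfirst := (h.2 ⟨0, by omega⟩).trans_lt hΦ
    rw [← hr, ← mul_sub, abs_mul, abs_of_pos hq0, zero_add, pow_one, pow_one] at hfirst
    calc |lacunarySeries b a - r| < 1 / (2 * (q : ℝ)) / q := (lt_div_iff₀' hq0).2 hfirst
      _ = 1 / (2 * (q : ℝ) ^ 2) := by field_simp
  have hden : r.den ^ 2 ≤ q := Nat.le_of_dvd (by omega) ((pow_dvd_pow _ hk).trans hdvd)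
  obtain rfl := eq_lacunarySum_of_abs_sub_lt hb ha hden hnq hqn hclose
  rw [den_lacunarySum (by omega) ha] at hdvd
  exact ⟨hdvd, hr⟩

lemma powerShiftLE_of_mul_lacunarySum_pow_eq (hb : 2 ≤ b) (ha : IsLacunary a)
    (hmul : ∀ l x : ℕ, 1 ≤ l → 1 ≤ x → Φ (l * x) ≤ l * Φ x) {n q d : ℕ} {p : Fin k → ℤ}
    (hd : 1 ≤ d) (hdvd : d ∣ q)
    (heq : ∀ j : Fin k, (q : ℝ) * (lacunarySum b a n : ℝ) ^ ((j : ℕ) + 1) = p j)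
    (h : (q, p) ∈ powerApproximants k Φ (lacunarySeries b a)) :
    PowerShiftLE k d (Φ d) (lacunarySum b a n) ((b : ℝ) ^ a (n + 1))⁻¹ := by
  obtain ⟨l, rfl⟩ := hdvd
  have hl : 1 ≤ l := Nat.pos_of_mul_pos_left h.1
  have hs : (0 : ℝ) < lacunarySum b a n := mod_cast lacunarySum_pos (by omega) a n
  have hshift : PowerShiftLE k d (Φ d) (lacunarySum b a n)
      (lacunarySeries b a - lacunarySum b a n) := fun j => by
    have hj := (le_abs_self _).trans (h.2 j)
    rw [← heq, ← mul_sub, mul_comm d l, Nat.cast_mul, mul_assoc] at hj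
    rw [add_sub_cancel]
    exact le_of_mul_le_mul_left (hj.trans (hmul l d hl hd)) (by positivity)
  exact hshift.anti (by positivity) (by positivity)
    (le_sub_iff_add_le'.2 (lacunarySum_add_le_lacunarySeries hb ha n))

theorem finite_powerApproximants_lacunarySeries (hb : 2 ≤ b) (ha : IsLacunary a) (hk : 2 ≤ k)
    (hsmall : ∀ᶠ q : ℕ in atTop, Φ q < 1 / (2 * (q : ℝ)))
    (hmul : ∀ l x : ℕ, 1 ≤ l → 1 ≤ x → Φ (l * x) ≤ l * Φ x)
    (hshift : ∀ᶠ n in atTop, ¬ PowerShiftLE k ((b ^ a n) ^ k : ℕ) (Φ ((b ^ a n) ^ k))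
      (lacunarySum b a n) ((b : ℝ) ^ a (n + 1))⁻¹) :
    (powerApproximants k Φ (lacunarySeries b a)).Finite := by
  refine finite_powerApproximants_of_eventually_notMem ?_
  have hpow : StrictMono fun n => b ^ a n := (pow_right_strictMono₀ hb).comp ha.strictMono
  filter_upwards [eventually_exists_le_lt_succ hpow hshift, hsmall] with q ⟨n, hn, hnq, hqn⟩ hΦ p hp
  obtain ⟨hdvd, heq⟩ := dvd_and_mul_lacunarySum_pow_eq hb ha hk hnq hqn hΦ hp
  exact hn (powerShiftLE_of_mul_lacunarySum_pow_eq hb ha hmul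
    (Nat.one_le_iff_ne_zero.2 (by positivity)) hdvd heq hp)

lemma eventually_not_powerShiftLE_const_mul (hb : 2 ≤ b) (ha : IsLacunary a) {D ε : ℕ → ℝ}
    {c : ℝ} (hD : ∀ n, 0 ≤ D n) (hc : 0 < c) (hcb : c * b < 1)
    (h : ∀ n, ¬ PowerShiftLE k (D n) (ε n) (lacunarySum b a n)
      (b * ((b : ℝ) ^ a (n + 1))⁻¹ + (b * ((b : ℝ) ^ a (n + 1))⁻¹) ^ 2)) :
    ∀ᶠ n in atTop, ¬ PowerShiftLE k (D n) (c * ε n) (lacunarySum b a n)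
      ((b : ℝ) ^ a (n + 1))⁻¹ := by
  have hterm : Tendsto (fun n => ((b : ℝ) ^ a (n + 1))⁻¹) atTop (𝓝[>] 0) :=
    tendsto_nhdsWithin_iff.2
      ⟨(tendsto_add_atTop_iff_nat 1).2 (summable_inv_pow hb ha).tendsto_atTop_zero,
        .of_forall fun n => mem_Ioi.2 (by positivity)⟩
  have hs : (0 : ℝ) < lacunarySum b a 0 := mod_cast lacunarySum_pos (by omega) a 0
  filter_upwards [hterm.eventually
    (eventually_mul_one_add_div_pow_le hcb (lacunarySum b a 0) k)] with n hn hshift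
  have hle : (lacunarySum b a 0 : ℝ) ≤ lacunarySum b a n := mod_cast lacunarySum_zero_le b a n
  have hs_n : (0 : ℝ) < lacunarySum b a n := hs.trans_le hle
  refine h n (hshift.of_const_mul hc (hD n) hs_n (by positivity) (by positivity)
    (le_trans ?_ hn))
  gcongr

end Approximants

section Construction

variable {k b : ℕ}

lemma exists_powerShiftLE_inv_pow_add_sq (k : ℕ) (hb : 2 ≤ b) (D s : ℝ) {ε : ℝ} (hε : 0 < ε) :
    ∃ A : ℕ, PowerShiftLE k D ε s (((b : ℝ) ^ A)⁻¹ + (((b : ℝ) ^ A)⁻¹) ^ 2) := by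
  have hinv : Tendsto (fun A : ℕ => ((b : ℝ) ^ A)⁻¹) atTop (𝓝 0) :=
    tendsto_inv_atTop_zero.comp (tendsto_pow_atTop_atTop_of_one_lt (mod_cast hb))
  have hsum := hinv.add (hinv.pow 2)
  rw [zero_pow two_ne_zero, add_zero] at hsum
  exact (hsum.eventually (eventually_powerShiftLE k D s hε)).exists

lemma PowerShiftLE.sq_lt_pow (hb : 0 < b) (hk : 0 < k) {D ε s : ℝ} {A : ℕ} (hD : 0 < D)
    (hε : ε < 1 / (2 * D))
    (h : PowerShiftLE k D ε s (((b : ℝ) ^ A)⁻¹ + (((b : ℝ) ^ A)⁻¹) ^ 2)) : D ^ 2 < b ^ A := by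
  have hx : 0 < ((b : ℝ) ^ A)⁻¹ := by positivity
  have hlt : D ^ 2 * ((b : ℝ) ^ A)⁻¹ < 1 := by
    have := h.two_mul_sq_mul_lt_one hk hD hε
    nlinarith [mul_pos (pow_pos hD 2) hx, mul_pos (pow_pos hD 2) (pow_pos hx 2)]
  rwa [← div_eq_mul_inv, div_lt_one (by positivity)] at hlt

/-- After a digit `1` at position `m`, with value `s` so far, the next digit `1` may be put at
position `A`: there is a long gap, and `PowerShiftLE` fails for `x + x ^ 2`, `x = b ^ (-(A - 1))`,
which bounds the shift that digits `1` from position `A - 1` on can cause. -/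
def IsNextExponent (k b : ℕ) (ε s : ℝ) (m A : ℕ) : Prop :=
  4 * m ≤ A ∧ ¬ PowerShiftLE k ((b ^ m) ^ k : ℕ) ε s
    (b * ((b : ℝ) ^ A)⁻¹ + (b * ((b : ℝ) ^ A)⁻¹) ^ 2)

lemma isNextExponent_of_isLeast (hb : 2 ≤ b) (hk : 2 ≤ k) {m A B : ℕ} {ε s : ℝ} (hm : 1 ≤ m)
    (hε : ε < 1 / (2 * ((b ^ m) ^ k : ℕ)))
    (hA : IsLeast {A : ℕ | PowerShiftLE k ((b ^ m) ^ k : ℕ) ε s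
      (((b : ℝ) ^ A)⁻¹ + (((b : ℝ) ^ A)⁻¹) ^ 2)} A)
    (hBA : B ≤ A) (hAB : A ≤ B + 1) : IsNextExponent k b ε s m B := by
  have hlt : 4 * m < A := by
    have hpow : ((b ^ m) ^ k) ^ 2 < b ^ A :=
      mod_cast hA.1.sq_lt_pow (by omega) (by omega) (by positivity) hε
    refine (Nat.pow_lt_pow_iff_right hb).1 (lt_of_le_of_lt ?_ hpow)
    calc b ^ (4 * m) = ((b ^ m) ^ 2) ^ 2 := by ring
      _ ≤ ((b ^ m) ^ k) ^ 2 := by gcongr; exact Nat.one_le_pow _ _ (by omega)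
  obtain ⟨B, rfl⟩ := Nat.exists_eq_succ_of_ne_zero (show B ≠ 0 by omega)
  refine ⟨by omega, fun hB => ?_⟩
  rw [Nat.succ_eq_add_one, mul_inv_pow_succ (by omega)] at hB
  exact absurd (hA.2 hB) (by omega)

lemma exists_isLeast_powerShiftLE (hb : 2 ≤ b) (D s : ℝ) {ε : ℝ} (hε : 0 < ε) :
    ∃ A, IsLeast {A : ℕ | PowerShiftLE k D ε s (((b : ℝ) ^ A)⁻¹ + (((b : ℝ) ^ A)⁻¹) ^ 2)} A := by
  classical exact ⟨_, Nat.isLeast_find (exists_powerShiftLE_inv_pow_add_sq k hb D s hε)⟩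

lemma exists_le_le_add_one_notMem_Icc (hb : 2 ≤ b) {A : ℕ} (hA : A ≠ 0) (s y : ℝ) :
    ∃ B ≤ A, A ≤ B + 1 ∧
      y ∉ Icc (s + ((b : ℝ) ^ B)⁻¹) (s + (((b : ℝ) ^ B)⁻¹ + (((b : ℝ) ^ B)⁻¹) ^ 2)) := by
  obtain ⟨n, rfl⟩ := Nat.exists_eq_add_one_of_ne_zero hA
  have hb_real : (2 : ℝ) ≤ b := mod_cast hb
  have hx : 0 < ((b : ℝ) ^ (n + 1))⁻¹ := by positivity
  have hx_lt : ((b : ℝ) ^ (n + 1))⁻¹ < 1 :=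
    inv_lt_one_of_one_lt₀ (one_lt_pow₀ (by linarith) n.succ_ne_zero)
  by_cases hy : y < s + ((b : ℝ) ^ n)⁻¹
  · exact ⟨n, n.le_succ, le_rfl, fun hmem => hy.not_ge hmem.1⟩
  · refine ⟨n + 1, le_rfl, Nat.le_succ _, fun hmem => hy (hmem.2.trans_lt ?_)⟩
    have hx_sq : (((b : ℝ) ^ (n + 1))⁻¹) ^ 2 < ((b : ℝ) ^ (n + 1))⁻¹ :=
      pow_lt_self_of_lt_one₀ hx hx_lt one_lt_two
    have hx_mul : 2 * ((b : ℝ) ^ (n + 1))⁻¹ ≤ ((b : ℝ) ^ n)⁻¹ := by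
      rw [← mul_inv_pow_succ (by omega) n]
      gcongr
    linarith

lemma exists_seq_lacunarySum (b a₀ : ℕ) {R : ℕ → ℕ → ℚ → ℕ → Prop}
    (h : ∀ n m s, a₀ ≤ m → ∃ m', a₀ ≤ m' ∧ R n m s m') :
    ∃ a : ℕ → ℕ, a 0 = a₀ ∧ ∀ n, R n (a n) (lacunarySum b a n) (a (n + 1)) := by
  choose! next hle hR using h
  let state : ℕ → ℕ × ℚ := Nat.rec (a₀, ((b : ℚ) ^ a₀)⁻¹)
    fun n p => (next n p.1 p.2, p.2 + ((b : ℚ) ^ next n p.1 p.2)⁻¹)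
  have hge (n : ℕ) : a₀ ≤ (state n).1 := by
    induction n with
    | zero => exact le_rfl
    | succ n ih => exact hle _ _ _ ih
  have hsum (n : ℕ) : (state n).2 = lacunarySum b (fun i => (state i).1) n := by
    induction n with
    | zero => simp [lacunarySum, state]
    | succ n ih => rw [lacunarySum_succ, ← ih]
  exact ⟨fun n => (state n).1, rfl, fun n => hsum n ▸ hR _ _ _ (hge n)⟩

lemma exists_isNextExponent_powerShiftLE (hb : 2 ≤ b) (hk : 2 ≤ k) {m : ℕ} {ε : ℝ} (hm : 1 ≤ m)
    (hε0 : 0 < ε) (hε : ε < 1 / (2 * ((b ^ m) ^ k : ℕ))) (s : ℝ) :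
    ∃ A, IsNextExponent k b ε s m A ∧ PowerShiftLE k ((b ^ m) ^ k : ℕ) ε s
      (((b : ℝ) ^ A)⁻¹ + (((b : ℝ) ^ A)⁻¹) ^ 2) := by
  obtain ⟨A, hA⟩ := exists_isLeast_powerShiftLE hb ((b ^ m) ^ k : ℕ) s hε0
  exact ⟨A, isNextExponent_of_isLeast hb hk hm hε hA le_rfl A.le_succ, hA.1⟩

lemma exists_isNextExponent_notMem_Icc (hb : 2 ≤ b) (hk : 2 ≤ k) {m : ℕ} {ε : ℝ} (hm : 1 ≤ m)
    (hε0 : 0 < ε) (hε : ε < 1 / (2 * ((b ^ m) ^ k : ℕ))) (s y : ℝ) :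
    ∃ A, IsNextExponent k b ε s m A ∧
      y ∉ Icc (s + ((b : ℝ) ^ A)⁻¹) (s + (((b : ℝ) ^ A)⁻¹ + (((b : ℝ) ^ A)⁻¹) ^ 2)) := by
  obtain ⟨A, hA⟩ := exists_isLeast_powerShiftLE hb ((b ^ m) ^ k : ℕ) s hε0
  have hnext {B : ℕ} := isNextExponent_of_isLeast (B := B) hb hk hm hε hA
  have hA_ne : A ≠ 0 := by have := (hnext le_rfl A.le_succ).1; omega
  obtain ⟨B, hBA, hAB, hB⟩ := exists_le_le_add_one_notMem_Icc hb hA_ne s y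
  exact ⟨B, hnext hBA hAB, hB⟩

lemma exists_isLacunary_isNextExponent (hb : 2 ≤ b) (hk : 2 ≤ k) {Ψ : ℕ → ℝ}
    (hpos : ∀ q, 0 < Ψ q) (hsmall : ∀ᶠ q : ℕ in atTop, Ψ q < 1 / (2 * (q : ℝ))) (f : ℕ → ℝ) :
    ∃ a, IsLacunary a ∧
      (∀ n, IsNextExponent k b (Ψ ((b ^ a n) ^ k)) (lacunarySum b a n) (a n) (a (n + 1))) ∧
      (∀ i, PowerShiftLE k ((b ^ a (2 * i)) ^ k : ℕ) (Ψ ((b ^ a (2 * i)) ^ k))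
        (lacunarySum b a (2 * i))
        (((b : ℝ) ^ a (2 * i + 1))⁻¹ + (((b : ℝ) ^ a (2 * i + 1))⁻¹) ^ 2)) ∧
      lacunarySeries b a ∉ range f := by
  obtain ⟨N, hN⟩ := eventually_atTop.1 hsmall
  have hsmall_pow {m : ℕ} (hm : N + 3 ≤ m) : Ψ ((b ^ m) ^ k) < 1 / (2 * ((b ^ m) ^ k : ℕ)) := by
    have := (Nat.lt_pow_self hb).trans_le (Nat.le_self_pow (n := k) (by omega) (b ^ m))
    exact hN _ (by omega)
  -- Even steps make the approximation good; odd steps `2 * i + 1` make the series miss `f i`.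
  obtain ⟨a, ha0, ha⟩ := exists_seq_lacunarySum b (N + 3)
    (R := fun n m s A => IsNextExponent k b (Ψ ((b ^ m) ^ k)) s m A ∧
      ∀ i, (n = 2 * i → PowerShiftLE k ((b ^ m) ^ k : ℕ) (Ψ ((b ^ m) ^ k)) s
          (((b : ℝ) ^ A)⁻¹ + (((b : ℝ) ^ A)⁻¹) ^ 2)) ∧
        (n = 2 * i + 1 → f i ∉ Icc (s + ((b : ℝ) ^ A)⁻¹)
          (s + (((b : ℝ) ^ A)⁻¹ + (((b : ℝ) ^ A)⁻¹) ^ 2)))) fun n m s hm => by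
    obtain ⟨i, rfl | rfl⟩ := n.even_or_odd'
    · obtain ⟨A, hnext, hA⟩ := exists_isNextExponent_powerShiftLE hb hk (by omega)
        (hpos ((b ^ m) ^ k)) (hsmall_pow hm) s
      exact ⟨A, by have := hnext.1; omega, hnext, fun _ => ⟨fun _ => hA, by omega⟩⟩
    · obtain ⟨A, hnext, hA⟩ := exists_isNextExponent_notMem_Icc hb hk (by omega)
        (hpos ((b ^ m) ^ k)) (hsmall_pow hm) s (f i)
      refine ⟨A, by have := hnext.1; omega, hnext, fun i' => ⟨by omega, fun hi' => ?_⟩⟩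
      obtain rfl : i = i' := by omega
      exact hA
  have hlac : IsLacunary a := ⟨by omega, fun n => (ha n).1.1⟩
  refine ⟨a, hlac, fun n => (ha n).1, fun i => ((ha (2 * i)).2 i).1 rfl, ?_⟩
  rintro ⟨i, hi⟩
  refine ((ha (2 * i + 1)).2 i).2 rfl ?_
  rw [hi]
  exact ⟨lacunarySum_add_le_lacunarySeries hb hlac _, lacunarySeries_le_add_add_sq hb hlac _⟩

end Construction

/-- For `k ≥ 2`, `b ≥ 2`, the `{0,1}`-digit set `K_{J(b)}`, `Ψ` positive with
`Ψ(x) < 1/(2x)` for large `x` and `Ψ(l·x) ≤ l·Ψ(x)`, and every `0 < c < 1/b`, the set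
`(𝒦_k(Ψ) \ 𝒦_k(cΨ)) ∩ K_{J(b)}` is uncountable. -/
theorem powers_missing_digit_weak (k b : ℕ) (hk : 2 ≤ k) (hb : 2 ≤ b)
    (Ψ : ℕ → ℝ) (hpos : ∀ q, 0 < Ψ q)
    (hA3 : ∃ N : ℕ, ∀ x : ℕ, N ≤ x → Ψ x < 1 / (2 * (x : ℝ)))
    (hB2 : ∀ l x : ℕ, 1 ≤ l → 1 ≤ x → Ψ (l * x) ≤ (l : ℝ) * Ψ x)
    (c : ℝ) (hc0 : 0 < c) (hc1 : c < 1 / (b : ℝ)) :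
    ¬ ((Kk k Ψ \ Kk k (fun x => c * Ψ x)) ∩ baseExpSet b {0, 1}).Countable := by
  intro hcount
  have hsmall : ∀ᶠ q : ℕ in atTop, Ψ q < 1 / (2 * (q : ℝ)) := eventually_atTop.2 hA3
  have hcb : c * b < 1 := (lt_div_iff₀ (by positivity)).1 hc1
  have hc_le : c ≤ 1 := hc1.le.trans (div_le_self zero_le_one (mod_cast show 1 ≤ b by omega))
  obtain ⟨f, hf⟩ := countable_iff_exists_subset_range.1 (hcount.union (Algebraic.countable ℤ ℝ))
  obtain ⟨a, ha, hnext, hnear, hnotMem⟩ := exists_isLacunary_isNextExponent hb hk hpos hsmall f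
  have hinf : (powerApproximants k Ψ (lacunarySeries b a)).Infinite :=
    infinite_powerApproximants_lacunarySeries hb ha (by omega) <|
      infinite_of_injective_forall_mem (mul_right_injective₀ two_ne_zero) hnear
  have hfin : (powerApproximants k (fun x => c * Ψ x) (lacunarySeries b a)).Finite := by
    refine finite_powerApproximants_lacunarySeries hb ha hk ?_ ?_
      (eventually_not_powerShiftLE_const_mul hb ha (fun _ => by positivity) hc0 hcb
        fun n => (hnext n).2)
    · exact hsmall.mono fun q hq => (mul_le_of_le_one_left (hpos q).le hc_le).trans_lt hq
    · exact fun l x hl hx => mul_left_comm c (l : ℝ) (Ψ x) ▸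
        mul_le_mul_of_nonneg_left (hB2 l x hl hx) hc0.le
  have hmem : lacunarySeries b a ∈ Kk k Ψ :=
    ⟨fun P hP _ hroot => hnotMem (hf (Or.inr ⟨P, hP, hroot⟩)), hinf⟩
  exact hnotMem (hf (Or.inl ⟨⟨hmem, fun h => h.2 hfin⟩, lacunarySeries_mem_baseExpSet hb ha⟩))
end

section
/- Let b ≥ 3 be an integer, let K_{J(b)} be the set of numbers in [0,1] whose base-b expansion contains only the digits 0 and 1, and let γ = (1+√5)/2 be the golden ratio. Let Ψ : ℕ → (0,∞) satisfy Ψ(l·x) ≤ l·Ψ(x) for all positive integers l, x and Ψ(x) < x^{−γ−ε} for all sufficiently large x, for some ε > 0. Then the set (𝒦₁(Ψ) \ ⋃_{0<c<1/(b−1)} 𝒦₁(cΨ)) ∩ K_{J(b)} is uncountable. -/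
open Filter Set

/-- `K1 Ψ` is the set of irrational `ζ` such that `|q·ζ - p| ≤ Ψ q` holds for infinitely
many pairs `(q, p) ∈ ℕ × ℤ` with `q ≥ 1`. -/
def K1 (Ψ : ℕ → ℝ) : Set ℝ :=
  {ζ : ℝ | Irrational ζ ∧
    {qp : ℕ × ℤ | 1 ≤ qp.1 ∧ |(qp.1 : ℝ) * ζ - (qp.2 : ℝ)| ≤ Ψ qp.1}.Infinite}

/-!
A sequence of free binary choices is coded into a digit string over `{0, 1}` with the prefixes of
lengths `n k` giving reduced fractions `P k / Q k`, `Q k = b ^ n k`. After each prefix a word is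
inserted that makes the remaining expansion, which is the error `Q k * ζ - P k`, at most `Ψ (Q k)`
but asymptotically at least `Ψ (Q k) / (b - 1)`; one free digit follows, and then a digit `1`, which
makes the next fraction reduced. Multiples of `(Q k, P k)` are no better because
`Ψ (l * x) ≤ l * Ψ x`. For any other `(q, p)` with `Q k ≤ q < Q (k + 1)`, the integers
`q * P i - p * Q i` with `i = k, k + 1` are nonzero, so `q` cannot be close to `Q k` nor to
`Q (k + 1)`. With `Ψ x ≤ x ^ (-g)` the inserted words are short enough to contradict this as soon
as `g * (g - 1) > 1`, which is the condition that `g` exceed the golden ratio.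
-/

section Approximation

lemma one_le_mul_abs_add_mul_abs {q Q : ℕ} {p P : ℤ} (ζ : ℝ) (hne : (q : ℤ) * P ≠ p * Q) :
    1 ≤ Q * |(q : ℝ) * ζ - p| + q * |(Q : ℝ) * ζ - P| := by
  have hdet : (1 : ℝ) ≤ |(q : ℝ) * P - p * Q| := by
    exact_mod_cast Int.one_le_abs (sub_ne_zero.mpr hne)
  calc (1 : ℝ) ≤ |(q : ℝ) * P - p * Q| := hdet
    _ = |Q * (q * ζ - p) - q * (Q * ζ - P)| := by ring_nf
    _ ≤ |Q * (q * ζ - p)| + |q * (Q * ζ - P)| := abs_sub _ _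
    _ = Q * |(q : ℝ) * ζ - p| + q * |(Q : ℝ) * ζ - P| := by
        rw [abs_mul, abs_mul, Nat.abs_cast, Nat.abs_cast]

lemma irrational_of_forall_exists_abs_lt {ζ : ℝ}
    (h : ∀ δ > (0 : ℝ), ∃ (Q : ℕ) (P : ℤ), 0 < |(Q : ℝ) * ζ - P| ∧ |(Q : ℝ) * ζ - P| < δ) :
    Irrational ζ := by
  rintro ⟨r, rfl⟩
  have hden : (0 : ℝ) < r.den := by exact_mod_cast r.den_pos
  have hnum : (r.den : ℝ) * r = r.num := by exact_mod_cast r.den_mul_eq_num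
  obtain ⟨Q, P, hpos, hlt⟩ := h (1 / r.den) (by positivity)
  have hne : (r.den : ℤ) * P ≠ r.num * Q := by
    intro heq
    have heq' : (r.den : ℝ) * P = r.num * Q := by exact_mod_cast heq
    refine hpos.ne' (abs_eq_zero.mpr (mul_left_cancel₀ hden.ne' ?_))
    rw [mul_sub, heq', ← hnum]
    ring
  have hone := one_le_mul_abs_add_mul_abs (r : ℝ) hne
  rw [hnum, sub_self, abs_zero, mul_zero, zero_add] at hone
  rw [lt_div_iff₀ hden] at hlt
  linarith

lemma finite_of_eventually_lt_abs {ψ : ℕ → ℝ} {ζ : ℝ}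
    (h : ∀ᶠ q : ℕ in atTop, ∀ p : ℤ, ψ q < |(q : ℝ) * ζ - p|) :
    {qp : ℕ × ℤ | |(qp.1 : ℝ) * ζ - qp.2| ≤ ψ qp.1}.Finite := by
  obtain ⟨B, hB⟩ := eventually_atTop.mp h
  refine ((finite_Iio B).biUnion fun q _ ↦ (finite_Icc ⌈(q : ℝ) * ζ - ψ q⌉
    ⌊(q : ℝ) * ζ + ψ q⌋).image (Prod.mk q)).subset ?_
  rintro ⟨q, p⟩ hqp
  obtain ⟨hlo, hhi⟩ := abs_le.mp (show |(q : ℝ) * ζ - p| ≤ ψ q from hqp)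
  have hq : q < B := not_le.mp fun hBq ↦ (hB q hBq p).not_ge hqp
  exact mem_biUnion hq ⟨p, ⟨Int.ceil_le.mpr (by linarith), Int.le_floor.mpr (by linarith)⟩, rfl⟩

end Approximation

section Blocks

lemma exists_mem_block {n : ℕ → ℕ} (hn : StrictMono n) {i : ℕ} (hi : n 0 ≤ i) :
    ∃ k, n k ≤ i ∧ i < n (k + 1) := by
  have hmem : i ∈ ⋃ k, Ico (n k) (n (Order.succ k)) := by
    rw [iUnion_Ico_map_succ_eq_Ici (fun k ↦ hn.monotone bot_le)
      (not_bddAbove_of_tendsto_atTop hn.tendsto_atTop)]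
    exact hi
  exact mem_iUnion.mp hmem

lemma eventually_of_eventually_forall_block {n : ℕ → ℕ} (hn : StrictMono n) {p : ℕ → Prop}
    (h : ∀ᶠ k in atTop, ∀ i, n k ≤ i → i < n (k + 1) → p i) : ∀ᶠ i in atTop, p i := by
  obtain ⟨K, hK⟩ := eventually_atTop.mp h
  filter_upwards [eventually_ge_atTop (n K)] with i hi
  obtain ⟨k, hki, hik⟩ := exists_mem_block hn ((hn.monotone K.zero_le).trans hi)
  exact hK k (Nat.lt_succ_iff.mp (hn.lt_iff_lt.mp (hi.trans_lt hik))) i hki hik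

lemma exists_forall_block_eq {α : Type*} {n : ℕ → ℕ} (hn : StrictMono n) (F : ℕ → ℕ → α) :
    ∃ D : ℕ → α, ∀ k j, n k + j < n (k + 1) → D (n k + j) = F k j := by
  choose! idx hle hlt using fun i (hi : n 0 ≤ i) ↦ exists_mem_block hn hi
  refine ⟨fun i ↦ F (idx i) (i - n (idx i)), fun k j hj ↦ ?_⟩
  have h0 : n 0 ≤ n k + j := (hn.monotone k.zero_le).trans (Nat.le_add_right _ _)
  have hidx : idx (n k + j) = k := by
    refine le_antisymm ?_ ?_ <;> rw [← Nat.lt_succ_iff, ← hn.lt_iff_lt]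
    · exact (hle _ h0).trans_lt hj
    · exact (Nat.le_add_right _ _).trans_lt (hlt _ h0)
  simp only [hidx, Nat.add_sub_cancel_left]

end Blocks

section Criterion

variable {Ψ : ℕ → ℝ} {ζ κ τ g : ℝ} {Q : ℕ → ℕ} {P : ℕ → ℤ}

/-- Reduced fractions `P k / Q k` whose errors `|Q k * ζ - P k|` lie eventually between
`c * Ψ (Q k)` and `Ψ (Q k)` for each `c < κ`. The field `growth` bounds the gap to the next
denominator. -/
structure SharpApprox (Ψ : ℕ → ℝ) (ζ κ τ : ℝ) (Q : ℕ → ℕ) (P : ℕ → ℤ) : Prop where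
  strictMono : StrictMono Q
  isCoprime : ∀ᶠ k in atTop, IsCoprime (P k) (Q k : ℤ)
  abs_le : ∀ k, |(Q k : ℝ) * ζ - P k| ≤ Ψ (Q k)
  lt_abs : ∀ c < κ, ∀ᶠ k in atTop, c * Ψ (Q k) < |(Q k : ℝ) * ζ - P k|
  growth : ∃ C : ℝ, ∀ k, Q (k + 1) * Ψ (Q k) ≤ C * (Q k : ℝ) ^ τ

lemma tendsto_natCast_mul_zero (hΨ : ∀ q, 0 ≤ Ψ q)
    (hdecay : ∀ᶠ x : ℕ in atTop, Ψ x ≤ (x : ℝ) ^ (-g)) (hg : 1 < g) :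
    Tendsto (fun x : ℕ ↦ (x : ℝ) * Ψ x) atTop (nhds 0) := by
  have hlim : Tendsto (fun x : ℕ ↦ (x : ℝ) ^ (-(g - 1))) atTop (nhds 0) :=
    (tendsto_rpow_neg_atTop (sub_pos.mpr hg)).comp tendsto_natCast_atTop_atTop
  refine squeeze_zero' (.of_forall fun x ↦ mul_nonneg x.cast_nonneg (hΨ x)) ?_ hlim
  filter_upwards [hdecay, eventually_gt_atTop 0] with x hx hx0
  have hx0' : (0 : ℝ) < x := by exact_mod_cast hx0
  calc (x : ℝ) * Ψ x ≤ x * (x : ℝ) ^ (-g) := by gcongr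
    _ = (x : ℝ) ^ (-(g - 1)) := by
        rw [neg_sub, sub_eq_add_neg, Real.rpow_add hx0', Real.rpow_one]

lemma tendsto_zero_of_tendsto_natCast_mul (hΨ : ∀ q, 0 ≤ Ψ q)
    (h : Tendsto (fun x : ℕ ↦ (x : ℝ) * Ψ x) atTop (nhds 0)) : Tendsto Ψ atTop (nhds 0) := by
  refine squeeze_zero' (.of_forall hΨ) ?_ h
  filter_upwards [eventually_ge_atTop 1] with x hx
  exact le_mul_of_one_le_left (hΨ x) (by exact_mod_cast hx)

/-- Since `P / Q` is reduced, `(q, p) = (l * Q, l * P)`, and both sides of `hlow` scale by `l`. -/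
lemma lt_abs_of_mul_eq_mul (hhom : ∀ l x : ℕ, 1 ≤ l → 1 ≤ x → Ψ (l * x) ≤ l * Ψ x)
    {c : ℝ} (hc : 0 ≤ c) {q Q : ℕ} {p P : ℤ} (hq : 0 < q) (hQ : 0 < Q)
    (hcop : IsCoprime P (Q : ℤ)) (hlow : c * Ψ Q < |(Q : ℝ) * ζ - P|)
    (heq : (q : ℤ) * P = p * Q) : c * Ψ q < |(q : ℝ) * ζ - p| := by
  obtain ⟨l, rfl⟩ : Q ∣ q := by
    have hdvd : (Q : ℤ) ∣ q * P := heq ▸ dvd_mul_left _ _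
    exact_mod_cast hcop.symm.dvd_of_dvd_mul_right hdvd
  have hl : 0 < l := Nat.pos_of_mul_pos_left hq
  obtain rfl : p = l * P := by
    have hQ0 : (Q : ℤ) ≠ 0 := by exact_mod_cast hQ.ne'
    refine mul_right_cancel₀ hQ0 (heq.symm.trans ?_)
    push_cast
    ring
  calc c * Ψ (Q * l) ≤ c * (l * Ψ Q) := by
        rw [mul_comm Q l]
        gcongr
        exact hhom l Q hl hQ
    _ = l * (c * Ψ Q) := by ring
    _ < l * |(Q : ℝ) * ζ - P| := by gcongr
    _ = |((Q * l : ℕ) : ℝ) * ζ - (l * P : ℤ)| := by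
        rw [← Nat.abs_cast l, ← abs_mul]
        push_cast
        ring_nf

lemma one_le_mul_add_mul_of_abs_le (hΨ : ∀ q, 0 ≤ Ψ q)
    (hhom : ∀ l x : ℕ, 1 ≤ l → 1 ≤ x → Ψ (l * x) ≤ l * Ψ x)
    {c : ℝ} (hc : c ∈ Icc 0 1) {q Q : ℕ} {p P : ℤ} (hq : 0 < q) (hQ : 0 < Q)
    (hcop : IsCoprime P (Q : ℤ)) (hlow : c * Ψ Q < |(Q : ℝ) * ζ - P|)
    (hup : |(Q : ℝ) * ζ - P| ≤ Ψ Q) (hqp : |(q : ℝ) * ζ - p| ≤ c * Ψ q) :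
    1 ≤ Q * Ψ q + q * Ψ Q := by
  have hne : (q : ℤ) * P ≠ p * Q := fun heq ↦
    (lt_abs_of_mul_eq_mul hhom hc.1 hq hQ hcop hlow heq).not_ge hqp
  have hqp' : |(q : ℝ) * ζ - p| ≤ Ψ q := hqp.trans (mul_le_of_le_one_left (hΨ q) hc.2)
  refine (one_le_mul_abs_add_mul_abs ζ hne).trans ?_
  gcongr

lemma one_le_const_mul_rpow {x y z ψ C : ℝ} (hx : 0 < x) (hy : 0 < y) (hg : 1 ≤ g)
    (hψx : ψ ≤ x ^ (-g)) (hyψ : 1 ≤ 2 * (y * ψ)) (hzy : 1 ≤ 2 * (z * y ^ (-g)))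
    (hgrowth : z * ψ ≤ C * x ^ τ) : 1 ≤ 2 ^ (g + 1) * C * x ^ (-(g * (g - 1) - τ)) := by
  have hψ : 0 < ψ := pos_of_mul_pos_right (by linarith : 0 < y * ψ) hy.le
  have hyz : y ^ g ≤ 2 * z := by
    rw [Real.rpow_neg hy.le, ← mul_assoc, ← div_eq_mul_inv, one_le_div (by positivity)] at hzy
    exact hzy
  have hz : 0 < z := by linarith [Real.rpow_pos_of_pos hy g]
  have hψpow : ψ ^ (g - 1) ≤ x ^ (-(g * (g - 1))) := by
    calc ψ ^ (g - 1) ≤ (x ^ (-g)) ^ (g - 1) := by gcongr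
      _ = x ^ (-(g * (g - 1))) := by rw [← Real.rpow_mul hx.le, neg_mul]
  have h2 : (2 : ℝ) ^ (g + 1) = 2 ^ g * 2 := by
    rw [Real.rpow_add two_pos, Real.rpow_one]
  calc (1 : ℝ) ≤ (2 * (y * ψ)) ^ g := Real.one_le_rpow hyψ (by linarith)
    _ = 2 ^ g * (y ^ g * (ψ ^ (g - 1) * ψ)) := by
        rw [Real.mul_rpow two_pos.le (by positivity), Real.mul_rpow hy.le hψ.le,
          ← Real.rpow_add_one hψ.ne', sub_add_cancel]
    _ ≤ 2 ^ g * (2 * z * (x ^ (-(g * (g - 1))) * ψ)) := by gcongr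
    _ = 2 ^ (g + 1) * x ^ (-(g * (g - 1))) * (z * ψ) := by rw [h2]; ring
    _ ≤ 2 ^ (g + 1) * x ^ (-(g * (g - 1))) * (C * x ^ τ) := by gcongr
    _ = 2 ^ (g + 1) * C * x ^ (-(g * (g - 1) - τ)) := by
        rw [neg_sub', sub_neg_eq_add, Real.rpow_add hx]
        ring

namespace SharpApprox

lemma irrational (h : SharpApprox Ψ ζ κ τ Q P) (hlim : Tendsto Ψ atTop (nhds 0)) (hκ : 0 < κ) :
    Irrational ζ := by
  refine irrational_of_forall_exists_abs_lt fun δ hδ ↦ ?_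
  obtain ⟨k, hpos, hlt⟩ := ((h.lt_abs 0 hκ).and
    (h.strictMono.tendsto_atTop.eventually (hlim.eventually_lt_const hδ))).exists
  exact ⟨Q k, P k, by simpa only [zero_mul] using hpos, (h.abs_le k).trans_lt hlt⟩

lemma infinite (h : SharpApprox Ψ ζ κ τ Q P) :
    {qp : ℕ × ℤ | 1 ≤ qp.1 ∧ |(qp.1 : ℝ) * ζ - qp.2| ≤ Ψ qp.1}.Infinite := by
  refine infinite_of_injective_forall_mem (f := fun k ↦ (Q (k + 1), P (k + 1))) ?_ fun k ↦
    ⟨Nat.one_le_of_lt (h.strictMono k.lt_succ_self), h.abs_le _⟩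
  intro i j hij
  exact Nat.succ_injective (h.strictMono.injective (congrArg Prod.fst hij))

/-- Suppose `q` violates this and `Q k ≤ q < Q (k + 1)`. Comparison with `Q k` forces
`q ≥ 1 / (2 * Ψ (Q k))` and comparison with `Q (k + 1)` forces `Q (k + 1) ≥ q ^ g / 2`; for large
`k` the resulting gap between `Q k` and `Q (k + 1)` exceeds `growth`. -/
lemma eventually_lt_abs (h : SharpApprox Ψ ζ κ τ Q P) (hΨ : ∀ q, 0 ≤ Ψ q)
    (hhom : ∀ l x : ℕ, 1 ≤ l → 1 ≤ x → Ψ (l * x) ≤ l * Ψ x)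
    (hdecay : ∀ᶠ x : ℕ in atTop, Ψ x ≤ (x : ℝ) ^ (-g)) (hg : 1 < g) (hτ : τ < g * (g - 1))
    (hκ : κ ≤ 1) {c : ℝ} (hc : c ∈ Ico 0 κ) :
    ∀ᶠ q : ℕ in atTop, ∀ p : ℤ, c * Ψ q < |(q : ℝ) * ζ - p| := by
  obtain ⟨C, hC⟩ := h.growth
  have hQ := h.strictMono.tendsto_atTop
  have hsmall : ∀ᶠ x : ℕ in atTop, (x : ℝ) * Ψ x ≤ 1 / 2 :=
    (tendsto_natCast_mul_zero hΨ hdecay hg).eventually_le_const (by norm_num)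
  have hpow : ∀ᶠ k in atTop, 2 ^ (g + 1) * C * (Q k : ℝ) ^ (-(g * (g - 1) - τ)) < 1 := by
    have hlim := ((tendsto_rpow_neg_atTop (sub_pos.mpr hτ)).comp
      (tendsto_natCast_atTop_atTop.comp hQ)).const_mul (2 ^ (g + 1) * C)
    rw [mul_zero] at hlim
    exact hlim.eventually_lt_const one_pos
  have hgood := h.isCoprime.and (h.lt_abs c hc.2)
  refine eventually_of_eventually_forall_block h.strictMono ?_
  filter_upwards [hpow, hgood, (tendsto_add_atTop_nat 1).eventually hgood,
    hQ.eventually_forall_ge_atTop (hsmall.and hdecay), hQ.eventually_gt_atTop 0]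
    with k hpow_k ⟨hcop, hlow⟩ ⟨hcop', hlow'⟩ hlarge hQk q hkq hqk p
  have hq : 0 < q := hQk.trans_le hkq
  by_contra! hqp
  have hc1 : c ∈ Icc 0 1 := ⟨hc.1, hc.2.le.trans hκ⟩
  have hleft : 1 ≤ 2 * (q * Ψ (Q k)) := by
    have hgap := one_le_mul_add_mul_of_abs_le hΨ hhom hc1 hq hQk hcop hlow (h.abs_le k) hqp
    have : (Q k : ℝ) * Ψ q ≤ q * Ψ q :=
      mul_le_mul_of_nonneg_right (by exact_mod_cast hkq) (hΨ q)
    linarith [(hlarge q hkq).1]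
  have hright : 1 ≤ 2 * (Q (k + 1) * Ψ q) := by
    have hgap :=
      one_le_mul_add_mul_of_abs_le hΨ hhom hc1 hq (hq.trans hqk) hcop' hlow' (h.abs_le _) hqp
    have : (q : ℝ) * Ψ (Q (k + 1)) ≤ Q (k + 1) * Ψ (Q (k + 1)) :=
      mul_le_mul_of_nonneg_right (by exact_mod_cast hqk.le) (hΨ _)
    linarith [(hlarge _ (hkq.trans hqk.le)).1]
  have hright' : 1 ≤ 2 * (Q (k + 1) * (q : ℝ) ^ (-g)) :=
    hright.trans (by gcongr; exact (hlarge q hkq).2)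
  exact hpow_k.not_ge (one_le_const_mul_rpow (by exact_mod_cast hQk) (by exact_mod_cast hq)
    hg.le (hlarge _ le_rfl).2 hleft hright' (hC k))

theorem mem_K1_diff (h : SharpApprox Ψ ζ κ τ Q P) (hΨ : ∀ q, 0 ≤ Ψ q)
    (hhom : ∀ l x : ℕ, 1 ≤ l → 1 ≤ x → Ψ (l * x) ≤ l * Ψ x)
    (hdecay : ∀ᶠ x : ℕ in atTop, Ψ x ≤ (x : ℝ) ^ (-g)) (hg : 1 < g) (hτ : τ < g * (g - 1))
    (hκ : κ ∈ Ioc 0 1) : ζ ∈ K1 Ψ \ ⋃ c ∈ Ioo 0 κ, K1 (fun x ↦ c * Ψ x) := by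
  have hlim := tendsto_zero_of_tendsto_natCast_mul hΨ (tendsto_natCast_mul_zero hΨ hdecay hg)
  refine ⟨⟨h.irrational hlim hκ.1, h.infinite⟩, ?_⟩
  simp only [mem_iUnion, not_exists]
  rintro c ⟨hc0, hcκ⟩ ⟨-, hinf⟩
  exact hinf ((finite_of_eventually_lt_abs
    (h.eventually_lt_abs hΨ hhom hdecay hg hτ hκ.2 ⟨hc0.le, hcκ⟩)).subset fun _ hqp ↦ hqp.2)

end SharpApprox

end Criterion

section Expansion

/-- The real number `0.a₀a₁a₂…` in base `b`, the digits `0` and `1` being encoded as Booleans. -/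
noncomputable def expansion (b : ℕ) (a : ℕ → Bool) : ℝ :=
  ∑' n, ((a n).toNat : ℝ) / (b : ℝ) ^ (n + 1)

/-- The integer with base-`b` digits `a₀a₁…aₙ₋₁`, most significant digit first. -/
def digitPrefix (b : ℕ) (a : ℕ → Bool) : ℕ → ℕ
  | 0 => 0
  | n + 1 => b * digitPrefix b a n + (a n).toNat

variable {b : ℕ} {a : ℕ → Bool}

lemma expansion_eq_inv_mul_cantorFunction (b : ℕ) (a : ℕ → Bool) :
    expansion b a = (b : ℝ)⁻¹ * Cardinal.cantorFunction (b : ℝ)⁻¹ a := by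
  rw [expansion, Cardinal.cantorFunction, ← tsum_mul_left]
  refine tsum_congr fun n ↦ ?_
  cases h : a n
  · simp [h]
  · simp [h, pow_succ]

lemma expansion_injective (hb : 2 < b) : Function.Injective (expansion b) := by
  have hb0 : (0 : ℝ) < (b : ℝ)⁻¹ := by positivity
  have hb2 : (b : ℝ)⁻¹ < 1 / 2 := by
    rw [one_div]
    exact inv_strictAnti₀ two_pos (by exact_mod_cast hb)
  intro a a' h
  rw [expansion_eq_inv_mul_cantorFunction, expansion_eq_inv_mul_cantorFunction] at h
  exact Cardinal.cantorFunction_injective hb0 hb2 (mul_left_cancel₀ hb0.ne' h)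

lemma expansion_nonneg (b : ℕ) (a : ℕ → Bool) : 0 ≤ expansion b a :=
  tsum_nonneg fun _ ↦ by positivity

lemma mul_expansion (hb : 1 < b) (a : ℕ → Bool) :
    b * expansion b a = (a 0).toNat + expansion b (fun j ↦ a (j + 1)) := by
  have hb1 : (1 : ℝ) < b := by exact_mod_cast hb
  rw [expansion_eq_inv_mul_cantorFunction, expansion_eq_inv_mul_cantorFunction,
    mul_inv_cancel_left₀ (by positivity),
    Cardinal.cantorFunction_succ a (by positivity) (inv_lt_one_of_one_lt₀ hb1)]
  cases a 0 <;> simp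

lemma sub_one_mul_expansion_le_one (hb : 1 < b) (a : ℕ → Bool) : (b - 1) * expansion b a ≤ 1 := by
  have hb1 : (1 : ℝ) < b := by exact_mod_cast hb
  have hones : (b - 1) * expansion b (fun _ ↦ true) = 1 := by
    have := mul_expansion hb (fun _ ↦ true)
    simp only [Bool.toNat_true, Nat.cast_one] at this
    linarith
  have hmono : expansion b a ≤ expansion b (fun _ ↦ true) := by
    rw [expansion_eq_inv_mul_cantorFunction, expansion_eq_inv_mul_cantorFunction]
    gcongr
    exact Cardinal.cantorFunction_le (by positivity) (inv_lt_one_of_one_lt₀ hb1) fun _ _ ↦ rfl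
  exact (mul_le_mul_of_nonneg_left hmono (sub_nonneg.mpr hb1.le)).trans hones.le

lemma expansion_le_one (hb : 1 < b) (a : ℕ → Bool) : expansion b a ≤ 1 := by
  have hb2 : (2 : ℝ) ≤ b := by exact_mod_cast hb
  nlinarith [expansion_nonneg b a, sub_one_mul_expansion_le_one hb a]

lemma expansion_mem_baseExpSet (hb : 1 < b) (a : ℕ → Bool) :
    expansion b a ∈ baseExpSet b {0, 1} :=
  ⟨⟨expansion_nonneg b a, expansion_le_one hb a⟩, fun n ↦ (a n).toNat,
    fun n ↦ by cases a n <;> simp, rfl⟩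

lemma pow_mul_expansion (hb : 1 < b) (a : ℕ → Bool) (n : ℕ) :
    (b : ℝ) ^ n * expansion b a = digitPrefix b a n + expansion b (fun j ↦ a (n + j)) := by
  induction n with
  | zero => simp [digitPrefix]
  | succ n ih =>
    rw [pow_succ', mul_assoc, ih, mul_add, mul_expansion hb, digitPrefix]
    push_cast
    simp only [add_zero, add_assoc, add_comm 1]

lemma isCoprime_digitPrefix_pow {n : ℕ} (ha : a n = true) (m : ℕ) :
    IsCoprime (digitPrefix b a (n + 1) : ℤ) ((b ^ m : ℕ) : ℤ) := by
  rw [Nat.isCoprime_iff_coprime, digitPrefix, ha]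
  exact Nat.Coprime.pow_right m (by simp)

lemma digitPrefix_eq_zero {m : ℕ} (h : ∀ j < m, a j = false) : digitPrefix b a m = 0 := by
  induction m with
  | zero => rfl
  | succ m ih => simp [digitPrefix, ih fun j hj ↦ h j (hj.trans m.lt_succ_self), h m]

lemma pow_mul_expansion_of_zeros (hb : 1 < b) {m : ℕ} (h : ∀ j < m, a j = false) :
    (b : ℝ) ^ m * expansion b a = expansion b (fun j ↦ a (m + j)) := by
  rw [pow_mul_expansion hb, digitPrefix_eq_zero h, Nat.cast_zero, zero_add]

lemma one_sub_inv_pow_le_of_ones (hb : 1 < b) {L : ℕ} (h : ∀ j < L, a j = true) :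
    1 - ((b : ℝ) ^ L)⁻¹ ≤ (b - 1) * expansion b a := by
  have hb1 : (1 : ℝ) < b := by exact_mod_cast hb
  induction L generalizing a with
  | zero =>
    simpa using mul_nonneg (sub_nonneg.mpr hb1.le) (expansion_nonneg b a)
  | succ L ih =>
    have htail := ih (a := fun j ↦ a (j + 1)) fun j hj ↦ h _ (Nat.succ_lt_succ hj)
    have hstep := mul_expansion hb a
    rw [h 0 L.succ_pos, Bool.toNat_true, Nat.cast_one] at hstep
    refine le_of_mul_le_mul_left ?_ (zero_lt_one.trans hb1)
    calc b * (1 - ((b : ℝ) ^ (L + 1))⁻¹) = (b - 1) + (1 - ((b : ℝ) ^ L)⁻¹) := by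
          field_simp
          ring
      _ ≤ (b - 1) + (b - 1) * expansion b (fun j ↦ a (j + 1)) := by gcongr
      _ = b * ((b - 1) * expansion b a) := by rw [mul_left_comm, hstep]; ring

lemma mul_expansion_bounds_of_zero_ones (hb : 1 < b) {L : ℕ} (h0 : a 0 = false)
    (h1 : ∀ j < L, a (j + 1) = true) :
    1 - ((b : ℝ) ^ L)⁻¹ ≤ b * ((b - 1) * expansion b a) ∧ b * ((b - 1) * expansion b a) ≤ 1 := by
  have hstep := mul_expansion hb a
  rw [h0, Bool.toNat_false, Nat.cast_zero, zero_add] at hstep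
  rw [mul_left_comm, hstep]
  exact ⟨one_sub_inv_pow_le_of_ones hb h1, sub_one_mul_expansion_le_one hb _⟩

lemma mul_expansion_bounds_of_one_zeros (hb : 1 < b) {L : ℕ} (h0 : a 0 = true)
    (h1 : ∀ j < L, a (j + 1) = false) :
    1 ≤ b * expansion b a ∧ b * expansion b a ≤ 1 + ((b : ℝ) ^ L)⁻¹ := by
  have hbL : (0 : ℝ) < (b : ℝ) ^ L := by positivity
  rw [mul_expansion hb, h0, Bool.toNat_true, Nat.cast_one]
  refine ⟨le_add_of_nonneg_right (expansion_nonneg b _), ?_⟩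
  gcongr
  rw [← one_div, le_div_iff₀' hbL, pow_mul_expansion_of_zeros hb h1]
  exact expansion_le_one hb _

/-- The word `0 1^L` puts the expansion just below `1 / (b * (b - 1))` and the word `1 0^L` puts it
just above `1 / b`. The first is used for `t` up to `(1 + 1 / b ^ L) / b`, the second beyond. -/
lemma exists_leading_digit (hb : 2 < b) (L : ℕ) {t : ℝ} (hlo : 1 ≤ b * ((b - 1) * t))
    (hhi : (b - 1) * t ≤ 1) : ∃ d : Bool, ∀ a : ℕ → Bool, a 0 = d → (∀ j < L, a (j + 1) = !d) →
      (1 - 2 * ((b : ℝ) ^ L)⁻¹) * t ≤ (b - 1) * expansion b a ∧ expansion b a ≤ t := by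
  have hb' : 1 < b := by lia
  have hb3 : (3 : ℝ) ≤ b := by exact_mod_cast hb
  have hb1 : (0 : ℝ) < b - 1 := by linarith
  have hb0 : (0 : ℝ) < b := by linarith
  have ht : 0 < t :=
    pos_of_mul_pos_right (pos_of_mul_pos_right (one_pos.trans_le hlo) hb0.le) hb1.le
  have hδ0 : 0 < ((b : ℝ) ^ L)⁻¹ := by positivity
  have hδ1 : ((b : ℝ) ^ L)⁻¹ ≤ 1 := inv_le_one_of_one_le₀ (one_le_pow₀ (by linarith))
  set δ := ((b : ℝ) ^ L)⁻¹
  rcases le_or_gt (b * t) (1 + δ) with hle | hgt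
  · refine ⟨false, fun a h0 h1 ↦ ?_⟩
    obtain ⟨hlow, hup⟩ := mul_expansion_bounds_of_zero_ones hb' h0 h1
    refine ⟨le_of_mul_le_mul_left (le_trans ?_ hlow) hb0, ?_⟩
    · have hfactor : (1 + δ) * (1 - 2 * δ) ≤ 1 - δ := by nlinarith
      refine le_of_mul_le_mul_left ?_ (by linarith : 0 < 1 + δ)
      calc (1 + δ) * (b * ((1 - 2 * δ) * t)) = (1 + δ) * (1 - 2 * δ) * (b * t) := by ring
        _ ≤ (1 - δ) * (b * t) := by gcongr
        _ ≤ (1 - δ) * (1 + δ) := by gcongr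
        _ = (1 + δ) * (1 - δ) := mul_comm _ _
    · exact le_of_mul_le_mul_left (le_of_mul_le_mul_left (hup.trans hlo) hb0) hb1
  · refine ⟨true, fun a h0 h1 ↦ ?_⟩
    obtain ⟨hlow, hup⟩ := mul_expansion_bounds_of_one_zeros hb' h0 h1
    refine ⟨le_of_mul_le_mul_left ?_ hb0, le_of_mul_le_mul_left (hup.trans hgt.le) hb0⟩
    have hbt : b * t ≤ b - 1 := by nlinarith
    calc b * ((1 - 2 * δ) * t) ≤ b * t := by nlinarith [mul_pos hb0 ht]
      _ ≤ (b - 1) * 1 := by linarith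
      _ ≤ (b - 1) * (b * expansion b a) := by gcongr
      _ = b * ((b - 1) * expansion b a) := by ring

lemma exists_word (hb : 2 < b) (L : ℕ) {s : ℝ} (hs : 0 < s) (hs1 : (b - 1) * s ≤ 1) :
    ∃ (ℓ : ℕ) (w : ℕ → Bool), (b : ℝ) ^ ℓ * s ≤ (b : ℝ) ^ (L + 1) ∧
      ∀ a : ℕ → Bool, (∀ j < ℓ, a j = w j) →
        (1 - 2 * ((b : ℝ) ^ L)⁻¹) * s ≤ (b - 1) * expansion b a ∧ expansion b a ≤ s := by
  have hb3 : (3 : ℝ) ≤ b := by exact_mod_cast hb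
  have hb1 : (0 : ℝ) < b - 1 := by linarith
  have hb0 : (0 : ℝ) < b := by linarith
  obtain ⟨m, hlo, hhi⟩ := exists_nat_pow_near_of_lt_one (mul_pos hb1 hs) hs1
    (inv_pos.mpr hb0) (inv_lt_one_of_one_lt₀ (by linarith))
  have hbm : 0 < (b : ℝ) ^ m := by positivity
  rw [inv_pow, inv_lt_iff_one_lt_mul₀ (by positivity), pow_succ'] at hlo
  rw [inv_pow, ← one_div, le_div_iff₀' hbm] at hhi
  obtain ⟨d, hd⟩ := exists_leading_digit hb L (t := (b : ℝ) ^ m * s)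
    (by linarith) (by linarith)
  refine ⟨m + (1 + L), fun j ↦ if j < m then false else if j = m then d else !d, ?_, ?_⟩
  · have hle : (b : ℝ) ^ m * s ≤ 1 := by nlinarith [mul_pos hbm hs]
    calc (b : ℝ) ^ (m + (1 + L)) * s = (b : ℝ) ^ (L + 1) * ((b : ℝ) ^ m * s) := by ring
      _ ≤ (b : ℝ) ^ (L + 1) := mul_le_of_le_one_right (by positivity) hle
  · intro a ha
    have hzeros : ∀ j < m, a j = false := fun j hj ↦ by simp [ha j (by lia), hj]
    obtain ⟨hlow, hup⟩ := hd (fun j ↦ a (m + j)) (by simp [ha m (by lia)])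
      fun j hj ↦ by simp [ha (m + (j + 1)) (by lia)]
    rw [← pow_mul_expansion_of_zeros (by lia) hzeros] at hlow hup
    refine ⟨le_of_mul_le_mul_left ?_ hbm, le_of_mul_le_mul_left hup hbm⟩
    rwa [mul_left_comm, mul_left_comm _ (b - 1 : ℝ)]

end Expansion

section Coding

lemma exists_coded_sequences (n₀ : ℕ) (ℓ : ℕ → ℕ) (w : ℕ → ℕ → Bool) :
    ∃ n : ℕ → ℕ, n 0 = n₀ ∧ (∀ k, n (k + 1) = n k + ℓ (n k) + 2) ∧
      ∃ D : (ℕ → Bool) → ℕ → Bool, Function.Injective D ∧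
        ∀ a k, (∀ j < ℓ (n k), D a (n k + j) = w (n k) j) ∧ D a (n k + ℓ (n k) + 1) = true := by
  set n : ℕ → ℕ := fun k ↦ (fun m ↦ m + ℓ m + 2)^[k] n₀
  have hn : ∀ k, n (k + 1) = n k + ℓ (n k) + 2 := fun k ↦ Function.iterate_succ_apply' _ k n₀
  have hmono : StrictMono n := strictMono_nat_of_lt_succ fun k ↦ by rw [hn]; lia
  choose D hD using fun a : ℕ → Bool ↦ exists_forall_block_eq hmono fun k j ↦
    if j < ℓ (n k) then w (n k) j else if j = ℓ (n k) then a k else true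
  refine ⟨n, rfl, hn, D, fun a a' h ↦ funext fun k ↦ ?_, fun a k ↦ ⟨fun j hj ↦ ?_, ?_⟩⟩
  · have hfree : ∀ a, D a (n k + ℓ (n k)) = a k := fun a ↦ by
      simp [hD a k (ℓ (n k)) (by rw [hn]; lia)]
    rw [← hfree a, h, hfree a']
  · rw [hD a k j (by rw [hn]; lia), if_pos hj]
  · rw [add_assoc, hD a k _ (by rw [hn]; lia), if_neg (by lia), if_neg (by lia)]

variable {b : ℕ} {Ψ : ℕ → ℝ} {θ : ℝ}

lemma eventually_lt_one_sub_two_mul_inv_pow {ι : Type*} {l : Filter ι} {L : ι → ℕ} {x u : ℝ}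
    (hx : 1 < x) (hL : Tendsto L l atTop) (hu : u < 1) : ∀ᶠ k in l, u < 1 - 2 * (x ^ L k)⁻¹ := by
  have hlim : Tendsto (fun k ↦ 1 - 2 * (x ^ L k)⁻¹) l (nhds (1 - 2 * 0)) :=
    ((tendsto_inv_atTop_zero.comp
      ((tendsto_pow_atTop_atTop_of_one_lt hx).comp hL)).const_mul 2).const_sub 1
  exact hlim.eventually_const_lt (by simpa using hu)

lemma sharpApprox_expansion (hb : 1 < b) (hpos : ∀ q, 0 < Ψ q) {d : ℕ → Bool} {n ℓ L : ℕ → ℕ}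
    (hn : ∀ k, n (k + 1) = n k + ℓ k + 2) (hL : Tendsto L atTop atTop)
    (hLn : ∀ k, L k ≤ θ * n k) (hℓ : ∀ k, (b : ℝ) ^ ℓ k * Ψ (b ^ n k) ≤ (b : ℝ) ^ (L k + 1))
    (hlast : ∀ k, d (n k + ℓ k + 1) = true)
    (htail : ∀ k,
      (1 - 2 * ((b : ℝ) ^ L k)⁻¹) * Ψ (b ^ n k) ≤ (b - 1) * expansion b (fun j ↦ d (n k + j)) ∧
        expansion b (fun j ↦ d (n k + j)) ≤ Ψ (b ^ n k)) :
    SharpApprox Ψ (expansion b d) (1 / (b - 1)) (1 + θ) (fun k ↦ b ^ n k)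
      (fun k ↦ digitPrefix b d (n k)) := by
  have hb_one : (1 : ℝ) < b := by exact_mod_cast hb
  have hb1 : (0 : ℝ) < b - 1 := sub_pos.mpr hb_one
  have herr : ∀ k, |((b ^ n k : ℕ) : ℝ) * expansion b d - ((digitPrefix b d (n k) : ℤ) : ℝ)| =
      expansion b (fun j ↦ d (n k + j)) := fun k ↦ by
    rw [Nat.cast_pow, pow_mul_expansion hb, Int.cast_natCast, add_sub_cancel_left,
      abs_of_nonneg (expansion_nonneg b _)]
  refine ⟨?_, ?_, fun k ↦ ?_, fun c hc ↦ ?_, (b : ℝ) ^ 3, fun k ↦ ?_⟩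
  · exact (pow_right_strictMono₀ hb).comp (strictMono_nat_of_lt_succ fun k ↦ by rw [hn]; lia)
  · filter_upwards [eventually_ge_atTop 1] with k hk
    obtain ⟨i, rfl⟩ := Nat.exists_eq_add_of_le' hk
    rw [hn i]
    exact isCoprime_digitPrefix_pow (hlast i) _
  · rw [herr]
    exact (htail k).2
  · filter_upwards [eventually_lt_one_sub_two_mul_inv_pow hb_one hL
      ((lt_div_iff₀ hb1).mp hc)] with k hk
    rw [herr]
    refine lt_of_mul_lt_mul_left (lt_of_lt_of_le ?_ (htail k).1) hb1.le
    rw [← mul_assoc, mul_comm _ c]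
    exact mul_lt_mul_of_pos_right hk (hpos _)
  · have hpow : (b : ℝ) ^ L k ≤ ((b : ℝ) ^ n k) ^ θ := by
      rw [← Real.rpow_natCast, ← Real.rpow_natCast, ← Real.rpow_mul b.cast_nonneg, mul_comm _ θ]
      exact Real.rpow_le_rpow_of_exponent_le hb_one.le (hLn k)
    push_cast
    rw [hn, Real.rpow_add (by positivity), Real.rpow_one]
    calc (b : ℝ) ^ (n k + ℓ k + 2) * Ψ (b ^ n k)
        = (b : ℝ) ^ (n k + 2) * ((b : ℝ) ^ ℓ k * Ψ (b ^ n k)) := by ring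
      _ ≤ (b : ℝ) ^ (n k + 2) * (b : ℝ) ^ (L k + 1) := by gcongr; exact hℓ k
      _ = (b : ℝ) ^ 3 * ((b : ℝ) ^ n k * (b : ℝ) ^ L k) := by ring
      _ ≤ (b : ℝ) ^ 3 * ((b : ℝ) ^ n k * ((b : ℝ) ^ n k) ^ θ) := by gcongr

theorem exists_injective_sharpApprox (hb : 2 < b) (hpos : ∀ q, 0 < Ψ q)
    (hΨ : Tendsto Ψ atTop (nhds 0)) (hθ : 0 < θ) :
    ∃ D : (ℕ → Bool) → ℕ → Bool, Function.Injective D ∧ ∀ a, ∃ Q P,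
      SharpApprox Ψ (expansion b (D a)) (1 / (b - 1)) (1 + θ) Q P := by
  have hb' : 1 < b := by lia
  have hsmall : ∀ᶠ m : ℕ in atTop, (b - 1) * Ψ (b ^ m) ≤ 1 := by
    have hlim := (hΨ.comp (tendsto_pow_atTop_atTop_of_one_lt hb')).const_mul (b - 1 : ℝ)
    rw [mul_zero] at hlim
    exact hlim.eventually_le_const one_pos
  obtain ⟨n₀, hn₀⟩ := eventually_atTop.mp hsmall
  choose! ℓ w hℓ hw using fun m (hm : n₀ ≤ m) ↦
    exists_word hb ⌊θ * m⌋₊ (hpos (b ^ m)) (hn₀ m hm)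
  obtain ⟨n, hn0, hn, D, hD, hDn⟩ := exists_coded_sequences n₀ ℓ w
  have hmono : StrictMono n := strictMono_nat_of_lt_succ fun k ↦ by rw [hn]; lia
  have hn₀n : ∀ k, n₀ ≤ n k := fun k ↦ hn0 ▸ hmono.monotone k.zero_le
  refine ⟨D, hD, fun a ↦ ⟨_, _, sharpApprox_expansion hb' hpos hn (L := fun k ↦ ⌊θ * n k⌋₊) ?_
    (fun k ↦ Nat.floor_le (by positivity)) (fun k ↦ hℓ _ (hn₀n k)) (fun k ↦ (hDn a k).2)
    fun k ↦ hw _ (hn₀n k) _ (hDn a k).1⟩⟩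
  exact tendsto_nat_floor_atTop.comp
    ((tendsto_natCast_atTop_atTop.comp hmono.tendsto_atTop).const_mul_atTop hθ)

end Coding

lemma one_lt_goldenRatio_add_mul_sub_one {ε : ℝ} (hε : 0 < ε) :
    1 < (Real.goldenRatio + ε) * (Real.goldenRatio + ε - 1) := by
  nlinarith [Real.goldenRatio_sq, Real.one_lt_goldenRatio]

lemma not_countable_of_injective_nat_bool {α : Type*} {s : Set α} {f : (ℕ → Bool) → α}
    (hf : Function.Injective f) (hfs : ∀ a, f a ∈ s) : ¬ s.Countable := by
  have : Uncountable (ℕ → Bool) := by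
    rw [← Cardinal.aleph0_lt_mk_iff]
    simp [Cardinal.aleph0_lt_continuum]
  exact fun hs ↦ not_countable_univ (MapsTo.countable_of_injOn (fun a _ ↦ hfs a) hf.injOn hs)

/-- For `b ≥ 3`, the `{0,1}`-digit set `K_{J(b)}`, and `Ψ` positive with
`Ψ(l·x) ≤ l·Ψ(x)` and `Ψ(x) < x^{-γ-ε}` for large `x` (where `γ` is the golden ratio),
the set `(𝒦₁(Ψ) \ ⋃_{0<c<1/(b-1)} 𝒦₁(cΨ)) ∩ K_{J(b)}` is uncountable. -/
theorem missing_digit_k_eq_one (b : ℕ) (hb : 3 ≤ b)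
    (Ψ : ℕ → ℝ) (hpos : ∀ q, 0 < Ψ q)
    (hB2 : ∀ l x : ℕ, 1 ≤ l → 1 ≤ x → Ψ (l * x) ≤ (l : ℝ) * Ψ x)
    (hdecay : ∃ ε : ℝ, 0 < ε ∧ ∃ N : ℕ, ∀ x : ℕ, N ≤ x →
      Ψ x < (x : ℝ) ^ (-((1 + Real.sqrt 5) / 2) - ε)) :
    ¬ ((K1 Ψ \ ⋃ c ∈ Ioo (0 : ℝ) (1 / ((b : ℝ) - 1)), K1 (fun x => c * Ψ x)) ∩
        baseExpSet b {0, 1}).Countable := by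
  obtain ⟨ε, hε, N, hN⟩ := hdecay
  set g := Real.goldenRatio + ε with hg_def
  have hg : 1 < g := by linarith [Real.one_lt_goldenRatio]
  have hdecay : ∀ᶠ x : ℕ in atTop, Ψ x ≤ (x : ℝ) ^ (-g) := by
    filter_upwards [eventually_ge_atTop N] with x hx
    rw [hg_def, neg_add']
    exact (hN x hx).le
  obtain ⟨τ, hτ1, hτ⟩ := exists_between (one_lt_goldenRatio_add_mul_sub_one hε)
  have hκ : 1 / ((b : ℝ) - 1) ∈ Ioc 0 1 := by
    have hb' : (3 : ℝ) ≤ b := by exact_mod_cast hb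
    exact ⟨one_div_pos.mpr (by linarith), div_le_one_of_le₀ (by linarith) (by linarith)⟩
  have hnonneg : ∀ q, 0 ≤ Ψ q := fun q ↦ (hpos q).le
  obtain ⟨D, hD, happrox⟩ := exists_injective_sharpApprox hb hpos
    (tendsto_zero_of_tendsto_natCast_mul hnonneg (tendsto_natCast_mul_zero hnonneg hdecay hg))
    (sub_pos.mpr hτ1)
  refine not_countable_of_injective_nat_bool ((expansion_injective hb).comp hD) fun a ↦
    ⟨?_, expansion_mem_baseExpSet (by lia) _⟩
  obtain ⟨Q, P, h⟩ := happrox a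
  rw [add_sub_cancel] at h
  exact h.mem_K1_diff hnonneg hB2 hdecay hg hτ hκ
end

section
/- Let k ≥ 2 be an integer and let ζ ∈ (0, 1/2) be a real number. Then there exists q₀ (depending on k and ζ) such that: whenever p, q are integers with q ≥ q₀ and |ζ − p/q| = d·q^{−k} for some real d with 0 < d < 1/2, one has max_{1≤j≤k} ‖q^k·ζ^j‖ = q^k·|ζ − p/q| = q^{k−1}·|qζ − p| = d. -/
open Filter Set

/-- `distNearestInt x` is the distance from `x` to the nearest integer. -/
noncomputable def distNearestInt (x : ℝ) : ℝ := |x - (round x : ℤ)|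

/-- `maxNorm k ζ z = max_{1≤j≤k} ‖z·ζ^j‖`. -/
noncomputable def maxNorm (k : ℕ) (ζ z : ℝ) : ℝ :=
  ⨆ j : Fin k, distNearestInt (z * ζ ^ ((j : ℕ) + 1))

/-! Let `|ζ| ≤ 1/2`. If `p / q` is so close to `ζ` that `|qζ - p| < 1/2`, then `2|p| < q + 1`, that
is `2|p| ≤ q`, so `p / q` also lies in `[-1/2, 1/2]`. On that interval `x ↦ x ^ j` is `1`-Lipschitz
because `j / 2 ^ (j - 1) ≤ 1`. For `j ≤ k` the number `q ^ k * (p / q) ^ j` is an integer, so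
`q ^ k * ζ ^ j` is at distance at most `q ^ k * |ζ - p / q| = d` from an integer; for `j = 1` the
distance is exactly `d`, and that integer is the nearest one because `d < 1/2`. -/

section OrderedField

variable {K : Type*} [Field K] [LinearOrder K] [IsStrictOrderedRing K]

lemma natCast_mul_pow_sub_one_le_one {r : K} (hr₀ : 0 ≤ r) (hr : r ≤ 1 / 2) (n : ℕ) :
    n * r ^ (n - 1) ≤ 1 := by
  have hn : (n : K) ≤ 2 ^ (n - 1) := by
    exact_mod_cast Nat.le_of_pred_lt (Nat.lt_two_pow_self (n := n - 1))
  calc n * r ^ (n - 1) ≤ 2 ^ (n - 1) * (1 / 2) ^ (n - 1) := by gcongr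
    _ = 1 := by rw [← mul_pow, mul_one_div_cancel two_ne_zero, one_pow]

lemma abs_pow_sub_pow_le_abs_sub {a b : K} (ha : |a| ≤ 1 / 2) (hb : |b| ≤ 1 / 2) (n : ℕ) :
    |a ^ n - b ^ n| ≤ |a - b| :=
  calc |a ^ n - b ^ n| ≤ |a - b| * n * max |a| |b| ^ (n - 1) := abs_pow_sub_pow_le a b n
    _ = |a - b| * (n * max |a| |b| ^ (n - 1)) := mul_assoc ..
    _ ≤ |a - b| := mul_le_of_le_one_right (abs_nonneg _) <|
        natCast_mul_pow_sub_one_le_one (le_max_of_le_left (abs_nonneg a)) (max_le ha hb) n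

lemma abs_intCast_div_natCast_le_half {x : K} (hx : |x| ≤ 1 / 2) {q : ℕ} {p : ℤ}
    (h : |q * x - p| < 1 / 2) : |(p : K) / q| ≤ 1 / 2 := by
  have hqx : |q * x| ≤ q * (1 / 2) := by
    rw [abs_mul, Nat.abs_cast]
    gcongr
  have hp_lt : 2 * |(p : K)| < q + 1 := by
    linarith [abs_sub_abs_le_abs_sub (p : K) (q * x), abs_sub_comm (p : K) (q * x)]
  have hp_le : 2 * |p| ≤ q := Int.lt_add_one_iff.mp (by exact_mod_cast hp_lt)
  have hp_le' : 2 * |(p : K)| ≤ q := by exact_mod_cast hp_le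
  rw [abs_div, Nat.abs_cast]
  exact div_le_of_le_mul₀ q.cast_nonneg (by norm_num) (by linarith)

end OrderedField

lemma distNearestInt_le_abs_sub_intCast (x : ℝ) (n : ℤ) : distNearestInt x ≤ |x - n| :=
  round_le x n

lemma distNearestInt_sub_intCast (x : ℝ) (n : ℤ) :
    distNearestInt (x - n) = distNearestInt x := by
  simp [distNearestInt]

lemma distNearestInt_eq_abs_iff {x : ℝ} : distNearestInt x = |x| ↔ |x| ≤ 1 / 2 := by
  rw [distNearestInt, ← UnitAddCircle.norm_eq, AddCircle.norm_coe_eq_abs_iff _ one_ne_zero, abs_one]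

lemma distNearestInt_eq_abs_sub_intCast {x : ℝ} {n : ℤ} (h : |x - n| ≤ 1 / 2) :
    distNearestInt x = |x - n| := by
  rw [← distNearestInt_sub_intCast x n, distNearestInt_eq_abs_iff.mpr h]

lemma maxNorm_eq_distNearestInt_mul {k : ℕ} (hk : k ≠ 0) {ζ z : ℝ}
    (h : ∀ j ∈ Icc 1 k, distNearestInt (z * ζ ^ j) ≤ distNearestInt (z * ζ)) :
    maxNorm k ζ z = distNearestInt (z * ζ) := by
  have : NeZero k := ⟨hk⟩
  have hle (j : Fin k) : distNearestInt (z * ζ ^ ((j : ℕ) + 1)) ≤ distNearestInt (z * ζ) :=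
    h _ ⟨Nat.le_add_left .., j.isLt⟩
  refine le_antisymm (ciSup_le hle) ?_
  simpa [maxNorm] using le_ciSup (f := fun j : Fin k ↦ distNearestInt (z * ζ ^ ((j : ℕ) + 1)))
    ⟨_, forall_mem_range.mpr hle⟩ 0

section Approximation

variable {k q : ℕ} {p : ℤ} {ζ : ℝ}

lemma abs_pow_mul_pow_sub_intCast (hq : q ≠ 0) {j : ℕ} (hj : j ≤ k) :
    |(q : ℝ) ^ k * ζ ^ j - ((q ^ (k - j) * p ^ j : ℤ) : ℝ)|
      = q ^ k * |ζ ^ j - (p / q) ^ j| := by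
  have hint : ((q ^ (k - j) * p ^ j : ℤ) : ℝ) = q ^ k * (p / q) ^ j := by
    push_cast
    rw [← pow_sub_mul_pow (q : ℝ) hj, mul_assoc, ← mul_pow,
      mul_div_cancel₀ _ (Nat.cast_ne_zero.mpr hq)]
  rw [hint, ← mul_sub, abs_mul, abs_of_nonneg (by positivity)]

lemma distNearestInt_pow_mul_pow_le (hζ : |ζ| ≤ 1 / 2) (hpq : |(p : ℝ) / q| ≤ 1 / 2) (hq : q ≠ 0)
    {j : ℕ} (hj : j ≤ k) :
    distNearestInt ((q : ℝ) ^ k * ζ ^ j) ≤ q ^ k * |ζ - p / q| :=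
  calc distNearestInt ((q : ℝ) ^ k * ζ ^ j)
      ≤ |(q : ℝ) ^ k * ζ ^ j - ((q ^ (k - j) * p ^ j : ℤ) : ℝ)| :=
        distNearestInt_le_abs_sub_intCast _ _
    _ = q ^ k * |ζ ^ j - (p / q) ^ j| := abs_pow_mul_pow_sub_intCast hq hj
    _ ≤ q ^ k * |ζ - p / q| :=
        mul_le_mul_of_nonneg_left (abs_pow_sub_pow_le_abs_sub hζ hpq j) (by positivity)

lemma distNearestInt_pow_mul_eq (hk : k ≠ 0) (hq : q ≠ 0)
    (h : (q : ℝ) ^ k * |ζ - p / q| ≤ 1 / 2) :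
    distNearestInt ((q : ℝ) ^ k * ζ) = q ^ k * |ζ - p / q| := by
  have hdist := abs_pow_mul_pow_sub_intCast (p := p) (ζ := ζ) hq (Nat.one_le_iff_ne_zero.mpr hk)
  simp only [pow_one] at hdist
  rw [← hdist] at h ⊢
  exact distNearestInt_eq_abs_sub_intCast h

lemma pow_mul_abs_sub_div (hk : k ≠ 0) (hq : q ≠ 0) :
    (q : ℝ) ^ k * |ζ - p / q| = q ^ (k - 1) * |q * ζ - p| := by
  have hden : (q : ℝ) * ζ - p = q * (ζ - p / q) := by field_simp
  rw [hden, abs_mul, Nat.abs_cast, ← mul_assoc, pow_sub_one_mul hk]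

lemma abs_mul_sub_le_pow_mul_abs_sub_div (hk : k ≠ 0) (hq : q ≠ 0) :
    |q * ζ - p| ≤ (q : ℝ) ^ k * |ζ - p / q| := by
  rw [pow_mul_abs_sub_div hk hq]
  exact le_mul_of_one_le_left (abs_nonneg _)
    (one_le_pow₀ (Nat.one_le_cast.mpr (Nat.one_le_iff_ne_zero.mpr hq)))

lemma maxNorm_pow_eq (hk : k ≠ 0) (hζ : |ζ| ≤ 1 / 2) (hq : q ≠ 0)
    (h : (q : ℝ) ^ k * |ζ - p / q| < 1 / 2) :
    maxNorm k ζ ((q : ℝ) ^ k) = q ^ k * |ζ - p / q| := by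
  have hpq : |(p : ℝ) / q| ≤ 1 / 2 :=
    abs_intCast_div_natCast_le_half hζ ((abs_mul_sub_le_pow_mul_abs_sub_div hk hq).trans_lt h)
  have hone := distNearestInt_pow_mul_eq hk hq h.le
  rw [← hone]
  refine maxNorm_eq_distNearestInt_mul hk fun j hj ↦ ?_
  rw [hone]
  exact distNearestInt_pow_mul_pow_le hζ hpq hq hj.2

theorem max_norm_of_good_approx_general (hk : k ≠ 0) (hζ : |ζ| ≤ 1 / 2) (hq : q ≠ 0) {d : ℝ}
    (hd : d < 1 / 2) (h : |ζ - (p : ℝ) / q| = d * ((q : ℝ) ^ k)⁻¹) :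
    maxNorm k ζ ((q : ℝ) ^ k) = q ^ k * |ζ - p / q| ∧
      (q : ℝ) ^ k * |ζ - p / q| = q ^ (k - 1) * |q * ζ - p| ∧
      (q : ℝ) ^ (k - 1) * |q * ζ - p| = d := by
  have hscaled : (q : ℝ) ^ k * |ζ - p / q| = d := by
    rw [h]
    field_simp
  have hden := pow_mul_abs_sub_div (ζ := ζ) (p := p) hk hq
  exact ⟨maxNorm_pow_eq hk hζ hq (hscaled.trans_lt hd), hden, hden.symm.trans hscaled⟩

end Approximation

/-- For `k ≥ 2` and `ζ ∈ (0, 1/2)`, there is `q₀` such that whenever `q ≥ q₀`,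
`|ζ - p/q| = d·q^{-k}` with `0 < d < 1/2` implies
`max_{1≤j≤k} ‖q^k·ζ^j‖ = q^k·|ζ - p/q| = q^{k-1}·|qζ - p| = d`. -/
theorem max_norm_of_good_approx (k : ℕ) (hk : 2 ≤ k) (ζ : ℝ) (hζ : ζ ∈ Ioo (0 : ℝ) (1 / 2)) :
    ∃ q₀ : ℕ, ∀ (q : ℕ) (p : ℤ) (d : ℝ), q₀ ≤ q → 0 < d → d < 1 / 2 →
      |ζ - (p : ℝ) / (q : ℝ)| = d * ((q : ℝ) ^ k)⁻¹ →
      maxNorm k ζ ((q : ℝ) ^ k) = (q : ℝ) ^ k * |ζ - (p : ℝ) / (q : ℝ)| ∧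
      (q : ℝ) ^ k * |ζ - (p : ℝ) / (q : ℝ)| = (q : ℝ) ^ (k - 1) * |(q : ℝ) * ζ - (p : ℝ)| ∧
      (q : ℝ) ^ (k - 1) * |(q : ℝ) * ζ - (p : ℝ)| = d := by
  have hζ' : |ζ| ≤ 1 / 2 := (abs_of_pos hζ.1).trans_le hζ.2.le
  exact ⟨1, fun q p d hq _ hd h ↦
    max_norm_of_good_approx_general (by lia) hζ' (by lia) hd h⟩
end

section
/- Let k ≥ 2 be an integer and consider the function L_k : (0,∞) → ℝ defined by L_k(ζ) := max_{1≤j≤k} j·ζ^{j−1}. Then L_k is continuous, its image is [1,∞), it is constantly equal to 1 on (0, 1/2], and it is strictly increasing on (1/2, ∞). -/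
open Filter Set

/-- `Lk k t = max_{1≤j≤k} j·t^{j-1}`. -/
noncomputable def Lk (k : ℕ) (t : ℝ) : ℝ :=
  ⨆ j : Fin k, (((j : ℕ) : ℝ) + 1) * t ^ (j : ℕ)

/-!
Near the origin the linear growth of the coefficients loses to the powers: since `j + 1 ≤ 2 ^ j`,
no term exceeds `1` when `|t| ≤ 1 / 2`. As soon as `t > 1 / 2` the linear term `2 * t` exceeds
the constant term, so beyond `1 / 2` the maximum is carried by nonconstant monomials, each strictly
increasing. The bound `2 * t ≤ Lk k t` also makes `Lk k` tend to infinity, and the intermediate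
value theorem gives the image.
-/

section

variable {k : ℕ}

lemma le_Lk {j : ℕ} (hj : j < k) (t : ℝ) : ((j : ℝ) + 1) * t ^ j ≤ Lk k t :=
  le_ciSup (f := fun i : Fin k => (((i : ℕ) : ℝ) + 1) * t ^ (i : ℕ))
    (finite_range _).bddAbove ⟨j, hj⟩

lemma exists_eq_Lk (hk : 0 < k) (t : ℝ) : ∃ j < k, ((j : ℝ) + 1) * t ^ j = Lk k t := by
  have : Nonempty (Fin k) := ⟨⟨0, hk⟩⟩
  obtain ⟨j, hj⟩ := exists_eq_ciSup_of_finite (f := fun i : Fin k => ((i : ℝ) + 1) * t ^ (i : ℕ))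
  exact ⟨j, j.isLt, hj⟩

lemma one_le_Lk (hk : 0 < k) (t : ℝ) : 1 ≤ Lk k t := by
  simpa using le_Lk hk t

lemma two_mul_le_Lk (hk : 2 ≤ k) (t : ℝ) : 2 * t ≤ Lk k t := by
  simpa [one_add_one_eq_two] using le_Lk (j := 1) hk t

lemma continuous_Lk (k : ℕ) : Continuous (Lk k) := by
  unfold Lk
  cases isEmpty_or_nonempty (Fin k) with
  | inl _ => simpa only [Real.iSup_of_isEmpty] using continuous_const
  | inr _ =>
    simp only [← Finset.sup'_univ_eq_ciSup]
    exact Continuous.finset_sup'_apply _ fun j _ => by fun_prop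

lemma tendsto_Lk_atTop (hk : 2 ≤ k) : Tendsto (Lk k) atTop atTop :=
  tendsto_atTop_mono (two_mul_le_Lk hk) (tendsto_id.const_mul_atTop two_pos)

lemma succ_mul_pow_le_one {t : ℝ} (ht : |t| ≤ 1 / 2) (j : ℕ) : ((j : ℝ) + 1) * t ^ j ≤ 1 := by
  have hj : (j : ℝ) + 1 ≤ 2 ^ j := mod_cast j.lt_two_pow_self
  calc
    ((j : ℝ) + 1) * t ^ j ≤ ((j : ℝ) + 1) * |t| ^ j := by
      rw [← abs_pow]
      gcongr
      exact le_abs_self _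
    _ ≤ 2 ^ j * |t| ^ j := by gcongr
    _ = (2 * |t|) ^ j := (mul_pow ..).symm
    _ ≤ 1 := pow_le_one₀ (by positivity) (by linarith)

lemma Lk_eq_one_of_abs_le_half (hk : 0 < k) {t : ℝ} (ht : |t| ≤ 1 / 2) : Lk k t = 1 := by
  obtain ⟨j, -, hj⟩ := exists_eq_Lk hk t
  exact le_antisymm (hj ▸ succ_mul_pow_le_one ht j) (one_le_Lk hk t)

lemma strictMonoOn_Lk (hk : 2 ≤ k) : StrictMonoOn (Lk k) (Ici (1 / 2)) := by
  intro s (hs : 1 / 2 ≤ s) t _ hst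
  obtain ⟨j, hjk, hj⟩ := exists_eq_Lk (zero_lt_two.trans_le hk) s
  rw [← hj]
  rcases eq_or_ne j 0 with rfl | hj₀
  · calc
      ((0 : ℕ) + 1 : ℝ) * s ^ 0 = 1 := by simp
      _ < 2 * t := by linarith
      _ ≤ Lk k t := two_mul_le_Lk hk t
  · have pow_lt : s ^ j < t ^ j := pow_lt_pow_left₀ hst (by linarith) hj₀
    calc
      ((j : ℝ) + 1) * s ^ j < ((j : ℝ) + 1) * t ^ j := by gcongr
      _ ≤ Lk k t := le_Lk hjk t

lemma image_Lk_Ioi_zero (hk : 2 ≤ k) : Lk k '' Ioi 0 = Ici 1 := by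
  have hk₀ : 0 < k := by lia
  refine Subset.antisymm (image_subset_iff.2 fun t _ => one_le_Lk hk₀ t) ?_
  have half_mem : (1 / 2 : ℝ) ∈ Ioi 0 := mem_Ioi.2 one_half_pos
  have Lk_half : Lk k (1 / 2) = 1 := Lk_eq_one_of_abs_le_half hk₀ (abs_of_pos one_half_pos).le
  rw [← Lk_half]
  exact isPreconnected_Ioi.intermediate_value_Ici half_mem
    (le_principal_iff.2 (Ioi_mem_atTop 0)) (continuous_Lk k).continuousOn (tendsto_Lk_atTop hk)

end

/-- For `k ≥ 2`, the function `L_k` is continuous on `(0,∞)`, its image on `(0,∞)` is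
`[1,∞)`, it is constantly `1` on `(0, 1/2]`, and it is strictly increasing on `(1/2, ∞)`. -/
theorem Lk_properties (k : ℕ) (hk : 2 ≤ k) :
    ContinuousOn (Lk k) (Ioi (0 : ℝ)) ∧
    Lk k '' Ioi (0 : ℝ) = Ici (1 : ℝ) ∧
    (∀ t ∈ Ioc (0 : ℝ) (1 / 2), Lk k t = 1) ∧
    StrictMonoOn (Lk k) (Ioi (1 / 2 : ℝ)) := by
  refine ⟨(continuous_Lk k).continuousOn, image_Lk_Ioi_zero hk, ?_,
    (strictMonoOn_Lk hk).mono Ioi_subset_Ici_self⟩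
  rintro t ⟨ht₀, ht⟩
  exact Lk_eq_one_of_abs_le_half (by lia) ((abs_of_pos ht₀).trans_le ht)
end

section
/- Let k ≥ 2 be an integer, ζ > 0 a positive irrational real number, and T > 1 a fixed real number. Then there exists ẑ = ẑ(T, ζ) such that: if an integer z ≥ ẑ satisfies max_{1≤j≤k} ‖ζ^j·z‖ ≤ z^{−T}, then, writing y₁ for the nearest integer to ζ·z and y₁/z = y₀/z₀ in lowest terms (gcd(y₀,z₀)=1, z₀>0), one has |ζ·z₀ − y₀| ≤ z₀^{−kT−k+1}. -/
open Filter Set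

/-!
Put `r = y₀ / z₀`, so that `r z` is the integer nearest to `ζ z`. Since
`|ζ - r| z = ‖ζ z‖ ≤ z ^ (-T)` and powers are locally Lipschitz,
`‖r ^ j z‖ ≤ C z ^ (-T) < 1 / z ≤ 1 / z₀` for `1 ≤ j ≤ k` once `z` is large. If `z₀ ^ j ∣ z` with
`j < k`, then `r ^ (j + 1) z` is a fraction with denominator `z₀`; being closer than `1 / z₀` to an
integer, it is an integer, and coprimality gives `z₀ ^ (j + 1) ∣ z`. Hence `z₀ ^ k ≤ z`, and the
bound on `|ζ - r|` in terms of `z` becomes one in terms of `z₀`.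
-/

theorem distNearestInt_intCast (n : ℤ) : distNearestInt n = 0 := by
  simp [distNearestInt]

theorem distNearestInt_le_add_abs_sub (x y : ℝ) :
    distNearestInt x ≤ distNearestInt y + |x - y| :=
  calc |x - round x| ≤ |x - round y| := round_le x _
    _ ≤ |x - y| + |y - round y| := abs_sub_le ..
    _ = distNearestInt y + |x - y| := add_comm ..

theorem dvd_of_distNearestInt_div_lt {a b : ℤ} (h : distNearestInt (a / b) < |(b : ℝ)|⁻¹) :
    b ∣ a := by
  have habs : 0 < |(b : ℝ)| := inv_pos.1 ((abs_nonneg _).trans_lt h)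
  have hb : (b : ℝ) ≠ 0 := abs_pos.1 habs
  set n : ℤ := round ((a : ℝ) / b)
  have hlt : |((a - b * n : ℤ) : ℝ)| < 1 :=
    calc |((a - b * n : ℤ) : ℝ)| = |(a : ℝ) / b - n| * |(b : ℝ)| := by
          rw [← abs_mul, sub_mul, div_mul_cancel₀ _ hb]
          push_cast
          ring_nf
      _ < |(b : ℝ)|⁻¹ * |(b : ℝ)| := by gcongr; exact h
      _ = 1 := inv_mul_cancel₀ habs.ne'
  have hzero : a - b * n = 0 := Int.abs_lt_one_iff.1 (by exact_mod_cast hlt)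
  exact ⟨n, sub_eq_zero.1 hzero⟩

section Divisibility

variable {p q z : ℤ}

theorem pow_succ_dvd_of_distNearestInt_lt (hpq : IsCoprime q p) {j : ℕ} (hdvd : q ^ j ∣ z)
    (h : distNearestInt ((p / q : ℝ) ^ (j + 1) * z) < |(q : ℝ)|⁻¹) : q ^ (j + 1) ∣ z := by
  obtain ⟨m, rfl⟩ := hdvd
  have hq : (q : ℝ) ≠ 0 := abs_pos.1 (inv_pos.1 ((abs_nonneg _).trans_lt h))
  have hfrac : (p / q : ℝ) ^ (j + 1) * (q ^ j * m : ℤ) = (p ^ (j + 1) * m : ℤ) / q := by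
    push_cast
    rw [div_pow]
    field_simp
    ring
  rw [hfrac] at h
  have hqm : q ∣ m := hpq.pow_right.dvd_of_dvd_mul_left (dvd_of_distNearestInt_div_lt h)
  exact pow_succ q j ▸ mul_dvd_mul_left _ hqm

theorem pow_dvd_of_forall_distNearestInt_lt (hpq : IsCoprime q p) {k : ℕ}
    (h : ∀ j, 1 ≤ j → j ≤ k → distNearestInt ((p / q : ℝ) ^ j * z) < |(q : ℝ)|⁻¹) :
    q ^ k ∣ z := by
  induction k with
  | zero => simp
  | succ k ih =>
    have hk : q ^ k ∣ z := ih fun j hj hjk => h j hj (hjk.trans k.le_succ)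
    exact pow_succ_dvd_of_distNearestInt_lt hpq hk (h (k + 1) k.succ_pos le_rfl)

theorem dvd_of_div_mul_eq_intCast (hpq : IsCoprime q p) (hq : q ≠ 0) {n : ℤ}
    (h : (p / q : ℝ) * z = n) : q ∣ z := by
  have hint : distNearestInt ((p / q : ℝ) ^ (0 + 1) * z) < |(q : ℝ)|⁻¹ := by
    rw [zero_add, pow_one, h, distNearestInt_intCast]
    positivity
  simpa using pow_succ_dvd_of_distNearestInt_lt hpq (by simp) hint

end Divisibility

theorem abs_pow_sub_pow_le_of_abs_sub_le_one {R : Type*} [CommRing R] [LinearOrder R]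
    [IsStrictOrderedRing R] {x y : R} (hxy : |x - y| ≤ 1) {j k : ℕ} (hjk : j ≤ k) :
    |x ^ j - y ^ j| ≤ k * (|x| + 1) ^ k * |x - y| := by
  have hy : |y| ≤ |x| + 1 := by
    linarith [abs_sub_abs_le_abs_sub y x, abs_sub_comm x y]
  have hmax : max |x| |y| ≤ |x| + 1 := max_le (by linarith) hy
  have hmax_pow : max |x| |y| ^ (j - 1) ≤ (|x| + 1) ^ k :=
    (pow_le_pow_left₀ (le_max_of_le_left (abs_nonneg x)) hmax _).trans
      (pow_le_pow_right₀ (by linarith [abs_nonneg x]) ((j.sub_le 1).trans hjk))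
  calc |x ^ j - y ^ j| ≤ |x - y| * j * max |x| |y| ^ (j - 1) := abs_pow_sub_pow_le ..
    _ ≤ |x - y| * k * (|x| + 1) ^ k := by gcongr
    _ = k * (|x| + 1) ^ k * |x - y| := by ring

section Approximation

variable {ζ r z : ℝ}

theorem abs_sub_mul_eq_distNearestInt (hz : 0 ≤ z) (hrz : r * z = round (ζ * z)) :
    |ζ - r| * z = distNearestInt (ζ * z) := by
  rw [distNearestInt, ← hrz, ← sub_mul, abs_mul, abs_of_nonneg hz]

theorem abs_sub_le_one_of_mul_eq_round (hz : 1 ≤ z) (hrz : r * z = round (ζ * z)) :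
    |ζ - r| ≤ 1 :=
  calc |ζ - r| ≤ |ζ - r| * z := le_mul_of_one_le_right (abs_nonneg _) hz
    _ = |ζ * z - round (ζ * z)| := abs_sub_mul_eq_distNearestInt (by linarith) hrz
    _ ≤ 1 := (abs_sub_round _).trans (by norm_num)

theorem distNearestInt_pow_mul_le {ε : ℝ} {j k : ℕ} (hz : 0 ≤ z) (hclose : |ζ - r| ≤ 1)
    (hε : |ζ - r| * z ≤ ε) (hjk : j ≤ k) (hj : distNearestInt (ζ ^ j * z) ≤ ε) :
    distNearestInt (r ^ j * z) ≤ (k * (|ζ| + 1) ^ k + 1) * ε := by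
  have hdiff : |r ^ j * z - ζ ^ j * z| ≤ k * (|ζ| + 1) ^ k * ε :=
    calc |r ^ j * z - ζ ^ j * z| = |ζ ^ j - r ^ j| * z := by
          rw [← sub_mul, abs_mul, abs_of_nonneg hz, abs_sub_comm]
      _ ≤ k * (|ζ| + 1) ^ k * |ζ - r| * z := by
          gcongr
          exact abs_pow_sub_pow_le_of_abs_sub_le_one hclose hjk
      _ ≤ k * (|ζ| + 1) ^ k * ε := by
          rw [mul_assoc]
          gcongr
  linarith [distNearestInt_le_add_abs_sub (r ^ j * z) (ζ ^ j * z)]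

end Approximation

theorem pow_dvd_of_distNearestInt_pow_mul_le {k z q : ℕ} {p : ℤ} {ζ ε : ℝ} (hz : 0 < z)
    (hq : 0 < q) (hpq : IsCoprime (q : ℤ) p) (hround : (p / q : ℝ) * z = round (ζ * z))
    (happrox : ∀ j, 1 ≤ j → j ≤ k → distNearestInt (ζ ^ j * z) ≤ ε)
    (hε : (k * (|ζ| + 1) ^ k + 1) * ε < (z : ℝ)⁻¹) : q ^ k ∣ z := by
  have hqz : q ≤ z := Nat.le_of_dvd hz <| Int.natCast_dvd_natCast.1 <|
    dvd_of_div_mul_eq_intCast hpq (by positivity) (by exact_mod_cast hround)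
  suffices h : ∀ j, 1 ≤ j → j ≤ k → distNearestInt ((p / q : ℝ) ^ j * z) < (q : ℝ)⁻¹ by
    have hdvd : (q : ℤ) ^ k ∣ z := pow_dvd_of_forall_distNearestInt_lt hpq (by simpa using h)
    exact_mod_cast hdvd
  intro j hj hjk
  have hclose : |ζ - p / q| ≤ 1 :=
    abs_sub_le_one_of_mul_eq_round (by exact_mod_cast hz) hround
  have hdist : |ζ - p / q| * z ≤ ε := by
    rw [abs_sub_mul_eq_distNearestInt z.cast_nonneg hround]
    simpa using happrox 1 le_rfl (hj.trans hjk)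
  calc distNearestInt ((p / q : ℝ) ^ j * z)
      ≤ (k * (|ζ| + 1) ^ k + 1) * ε :=
        distNearestInt_pow_mul_le z.cast_nonneg hclose hdist hjk (happrox j hj hjk)
    _ < (z : ℝ)⁻¹ := hε
    _ ≤ (q : ℝ)⁻¹ := by gcongr

theorem eventually_const_mul_rpow_neg_lt_inv (C : ℝ) {T : ℝ} (hT : 1 < T) :
    ∀ᶠ x : ℝ in atTop, C * x ^ (-T) < x⁻¹ := by
  filter_upwards [(tendsto_rpow_atTop (sub_pos.2 hT)).eventually_gt_atTop C,
    eventually_gt_atTop 0] with x hC hx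
  calc C * x ^ (-T) < x ^ (T - 1) * x ^ (-T) := by gcongr
    _ = x⁻¹ := by
      rw [← Real.rpow_add hx, ← Real.rpow_neg_one]
      ring_nf

theorem mul_le_rpow_of_pow_le {k : ℕ} {δ q z T : ℝ} (hq : 0 < q) (hqz : q ^ k ≤ z)
    (hT : -1 ≤ T) (hδ : δ * z ≤ z ^ (-T)) : δ * q ≤ q ^ (-(k : ℝ) * T - k + 1) := by
  have hz : 0 < z := (pow_pos hq k).trans_le hqz
  calc δ * q ≤ z ^ (-T - 1) * q := by
        gcongr
        rwa [Real.rpow_sub_one hz.ne', le_div_iff₀ hz]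
    _ ≤ (q ^ k) ^ (-T - 1) * q := by
        gcongr ?_ * _
        exact Real.rpow_le_rpow_of_nonpos (pow_pos hq k) hqz (by linarith)
    _ = q ^ (-(k : ℝ) * T - k + 1) := by
        rw [← Real.rpow_natCast, ← Real.rpow_mul hq.le, Real.rpow_add_one hq.ne']
        ring_nf

theorem good_approx_descends_general (k : ℕ) (hk : 1 ≤ k) (ζ : ℝ) (T : ℝ) (hT : 1 < T) :
    ∃ zhat : ℕ, ∀ z : ℕ, zhat ≤ z →
      (∀ j : ℕ, 1 ≤ j → j ≤ k →
        distNearestInt (ζ ^ j * (z : ℝ)) ≤ (z : ℝ) ^ (-T)) →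
      ∀ (z₀ : ℕ) (y₀ : ℤ), 0 < z₀ → Int.gcd y₀ (z₀ : ℤ) = 1 →
        (y₀ : ℝ) / (z₀ : ℝ) = ((round (ζ * (z : ℝ)) : ℤ) : ℝ) / (z : ℝ) →
        |ζ * (z₀ : ℝ) - (y₀ : ℝ)| ≤ (z₀ : ℝ) ^ (-(k : ℝ) * T - (k : ℝ) + 1) := by
  have hlarge := tendsto_natCast_atTop_atTop.eventually
    (eventually_const_mul_rpow_neg_lt_inv (k * (|ζ| + 1) ^ k + 1) hT)
  obtain ⟨zhat, hzhat⟩ := eventually_atTop.1 (hlarge.and (eventually_gt_atTop 0))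
  refine ⟨zhat, fun z hz happrox z₀ y₀ hz₀ hgcd hfrac => ?_⟩
  obtain ⟨hsmall, hzpos⟩ := hzhat z hz
  have hround : (y₀ / z₀ : ℝ) * z = round (ζ * z) := by
    rw [hfrac, div_mul_cancel₀ _ (by positivity)]
  have hcop : IsCoprime (z₀ : ℤ) y₀ := (Int.isCoprime_iff_gcd_eq_one.2 hgcd).symm
  have hdvd : z₀ ^ k ∣ z :=
    pow_dvd_of_distNearestInt_pow_mul_le hzpos hz₀ hcop hround happrox hsmall
  have hdist : |ζ - y₀ / z₀| * z ≤ (z : ℝ) ^ (-T) := by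
    rw [abs_sub_mul_eq_distNearestInt z.cast_nonneg hround]
    simpa using happrox 1 le_rfl hk
  calc |ζ * z₀ - y₀| = |ζ - y₀ / z₀| * z₀ := by
        rw [← Nat.abs_cast z₀, ← abs_mul, Nat.abs_cast, sub_mul, div_mul_cancel₀ _ (by positivity)]
    _ ≤ (z₀ : ℝ) ^ (-(k : ℝ) * T - k + 1) :=
        mul_le_rpow_of_pow_le (by positivity) (by exact_mod_cast Nat.le_of_dvd hzpos hdvd)
          (by linarith) hdist

/-- For `k ≥ 2`, `ζ > 0` irrational and fixed `T > 1`: there is `zhat` such that for every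
integer `z ≥ zhat` with `max_{1≤j≤k} ‖ζ^j·z‖ ≤ z^{-T}`, writing `y₁/z = y₀/z₀` in lowest
terms (`y₁` the nearest integer to `ζ·z`), we have `|ζ·z₀ - y₀| ≤ z₀^{-kT-k+1}`. -/
theorem good_approx_descends (k : ℕ) (hk : 2 ≤ k) (ζ : ℝ) (hζ0 : 0 < ζ)
    (hirr : Irrational ζ) (T : ℝ) (hT : 1 < T) :
    ∃ zhat : ℕ, ∀ z : ℕ, zhat ≤ z →
      (∀ j : ℕ, 1 ≤ j → j ≤ k →
        distNearestInt (ζ ^ j * (z : ℝ)) ≤ (z : ℝ) ^ (-T)) →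
      ∀ (z₀ : ℕ) (y₀ : ℤ), 0 < z₀ → Int.gcd y₀ (z₀ : ℤ) = 1 →
        (y₀ : ℝ) / (z₀ : ℝ) = ((round (ζ * (z : ℝ)) : ℤ) : ℝ) / (z : ℝ) →
        |ζ * (z₀ : ℝ) - (y₀ : ℝ)| ≤ (z₀ : ℝ) ^ (-(k : ℝ) * T - (k : ℝ) + 1) :=
  good_approx_descends_general k (one_le_two.trans hk) ζ T hT
end
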